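/- arXiv:2201.06183 — 10 statements merged into one kernel-verified Lean document; each statement's English description precedes it below -/
import Mathlib

section
/- Let (M, a, p) be a rebalancing problem. For a column index j let I_j = { i : M_{ij} > 0 }, and for a row index i let J_i = { j : M_{ij} > 0 }. Then there exists a dollar-allocation A for (M, a, p) satisfying A_{ij} = 0 whenever M_{ij} = 0 if and only if the following two conditions hold: (1) for every subset J ⊆ {1, …, n}, ∑_{i ∈ ∪_{j∈J} I_j} a_i ≥ ∑_{j∈J} p_j; and (2) for every subset I ⊆ {1, …, m}, ∑_{j ∈ ∪_{i∈I} J_i} p_j ≥ ∑_{i∈I} a_i. -/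
/-!
Only the relation `r i j ↔ 0 < M i j` matters, and the theorem becomes Gale's supply–demand theorem
for the transportation problem from `α` to `β` along `r`. Necessity is double counting. For
sufficiency, the surplus `∑ i ∈ suppliers r J, a i - ∑ j ∈ J, p j` is a submodular function of `J`,
so if it is nonnegative, then the tight sets, those of surplus zero, are closed under unions.
Let `j` have positive demand and let `U` be the largest tight set avoiding `j`. Since `insert j U`
has nonnegative surplus, some supplier `i` of `j` outside `suppliers r U` has positive supply, and
no tight set obstructs sending goods from `i` to `j`. Send as much as the constraints allow: a
supply or a demand is exhausted or a new set becomes tight, and no zero supply, demand or surplus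
ever becomes positive again, so finitely many such shipments meet all the demand. Condition (2)
for the set of all rows then leaves no supply over. No limiting argument is involved, which is why
the quantities may lie in any linearly ordered abelian group.
-/

open Finset

variable {α β ι K : Type*}

/-- The neighbourhood of the set of consumers `J` in the bipartite graph `r` of admissible
routes. -/
noncomputable def suppliers [Fintype α] (r : α → β → Prop) (J : Finset β) : Finset α :=
  open scoped Classical in {i | ∃ j ∈ J, r i j}

/-- A feasible solution of the transportation problem with supplies `a`, demands `p` and
admissible routes `r`. Demands are met exactly, but supplies need not be used up. -/
structure IsTransportPlan [Fintype α] [Fintype β] [AddCommMonoid K] [LE K]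
    (r : α → β → Prop) (a : α → K) (p : β → K) (A : α → β → K) : Prop where
  nonneg : ∀ i j, 0 ≤ A i j
  sum_row_le : ∀ i, ∑ j, A i j ≤ a i
  sum_col : ∀ j, ∑ i, A i j = p j
  eq_zero_of_not : ∀ i j, ¬ r i j → A i j = 0

/-- The amount by which the supply available to the consumers in `J` exceeds their total demand. A
set with surplus zero is called tight. -/
noncomputable def surplus [Fintype α] [AddCommGroup K]
    (r : α → β → Prop) (a : α → K) (p : β → K) (J : Finset β) : K :=
  ∑ i ∈ suppliers r J, a i - ∑ j ∈ J, p j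

/-- All quantities that must stay nonnegative while goods are shipped, gathered into one family:
the remaining supplies, the remaining demands and the surpluses of all sets of consumers. -/
noncomputable def slack [Fintype α] [AddCommGroup K]
    (r : α → β → Prop) (a : α → K) (p : β → K) : α ⊕ β ⊕ Finset β → K :=
  Sum.elim a (Sum.elim p (surplus r a p))

/-- The indices of the entries of `slack` that decrease when goods are shipped from `i` to `j`.
For a set of consumers, this means that it draws on `i` but does not contain `j`. -/
def loadedBy [Fintype α] (r : α → β → Prop) (i : α) (j : β) : Set (α ⊕ β ⊕ Finset β) :=
  {x | x.elim (· = i) (Sum.elim (· = j) fun J => i ∈ suppliers r J ∧ j ∉ J)}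

section Routes

variable [Fintype α] {r : α → β → Prop} {i : α} {j : β} {J J' : Finset β}

@[simp]
lemma mem_suppliers : i ∈ suppliers r J ↔ ∃ j ∈ J, r i j := by
  simp [suppliers]

lemma filter_exists_eq_suppliers (r : α → β → Prop) (J : Finset β)
    [DecidablePred fun i => ∃ j ∈ J, r i j] :
    ({i | ∃ j ∈ J, r i j} : Finset α) = suppliers r J := by
  ext
  simp

lemma suppliers_mono (h : J ⊆ J') : suppliers r J ⊆ suppliers r J' := fun _ hi =>
  let ⟨j, hj, hij⟩ := mem_suppliers.1 hi
  mem_suppliers.2 ⟨j, h hj, hij⟩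

lemma suppliers_union [DecidableEq α] [DecidableEq β] :
    suppliers r (J ∪ J') = suppliers r J ∪ suppliers r J' := by
  ext i
  simp [or_and_right, exists_or]

@[simp]
lemma inl_mem_loadedBy {k : α} : .inl k ∈ loadedBy r i j ↔ k = i := Iff.rfl

@[simp]
lemma inr_inl_mem_loadedBy {l : β} : .inr (.inl l) ∈ loadedBy r i j ↔ l = j := Iff.rfl

@[simp]
lemma inr_inr_mem_loadedBy :
    .inr (.inr J) ∈ loadedBy r i j ↔ i ∈ suppliers r J ∧ j ∉ J := Iff.rfl

end Routes

namespace IsTransportPlan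

variable [Fintype α] [Fintype β] [AddCommMonoid K] {r : α → β → Prop}
  {a a' : α → K} {p p' : β → K} {A A' : α → β → K}

lemma zero [Preorder K] (ha : ∀ i, 0 ≤ a i) : IsTransportPlan r a (0 : β → K) 0 where
  nonneg _ _ := le_rfl
  sum_row_le i := by simpa using ha i
  sum_col _ := by simp
  eq_zero_of_not _ _ _ := rfl

lemma single [DecidableEq α] [DecidableEq β] [Preorder K] {i : α} {j : β} {t : K}
    (hij : r i j) (ht : 0 ≤ t) :
    IsTransportPlan r (Pi.single i t) (Pi.single j t) (Pi.single i (Pi.single j t)) where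
  nonneg k l := by
    have h : (0 : α → β → K) ≤ Pi.single i (Pi.single j t) := by simpa using ht
    exact h k l
  sum_row_le k := by
    obtain rfl | hk := eq_or_ne k i <;> simp [*]
  sum_col l := by
    simp [Pi.single_apply, ite_apply]
  eq_zero_of_not k l hkl := by
    obtain rfl | hk := eq_or_ne k i
    · have hl : l ≠ j := fun h => hkl (h ▸ hij)
      simp [hl]
    · simp [hk]

lemma add [Preorder K] [IsOrderedAddMonoid K] (h : IsTransportPlan r a p A)
    (h' : IsTransportPlan r a' p' A') :
    IsTransportPlan r (a + a') (p + p') (A + A') where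
  nonneg i j := add_nonneg (h.nonneg i j) (h'.nonneg i j)
  sum_row_le i := by
    simpa [sum_add_distrib] using add_le_add (h.sum_row_le i) (h'.sum_row_le i)
  sum_col j := by simp [sum_add_distrib, h.sum_col, h'.sum_col]
  eq_zero_of_not i j hij := by simp [h.eq_zero_of_not i j hij, h'.eq_zero_of_not i j hij]

lemma sum_demand_le [Preorder K] [IsOrderedAddMonoid K] (h : IsTransportPlan r a p A)
    (J : Finset β) :
    ∑ j ∈ J, p j ≤ ∑ i ∈ suppliers r J, a i :=
  calc ∑ j ∈ J, p j = ∑ j ∈ J, ∑ i, A i j := by simp only [h.sum_col]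
    _ = ∑ j ∈ J, ∑ i ∈ suppliers r J, A i j := by
      refine sum_congr rfl fun j hj => (sum_subset (subset_univ _) fun i _ hi => ?_).symm
      exact h.eq_zero_of_not i j fun hij => hi (mem_suppliers.2 ⟨j, hj, hij⟩)
    _ = ∑ i ∈ suppliers r J, ∑ j ∈ J, A i j := sum_comm
    _ ≤ ∑ i ∈ suppliers r J, ∑ j, A i j := sum_le_sum fun i _ =>
      sum_le_sum_of_subset_of_nonneg (subset_univ J) fun j _ _ => h.nonneg i j
    _ ≤ ∑ i ∈ suppliers r J, a i := sum_le_sum fun i _ => h.sum_row_le i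

lemma sum_row_eq [PartialOrder K] [IsOrderedCancelAddMonoid K]
    (h : IsTransportPlan r a p A) (hap : ∑ i, a i ≤ ∑ j, p j) (i : α) :
    ∑ j, A i j = a i := by
  have total_le : ∑ i, a i ≤ ∑ i, ∑ j, A i j := by
    simpa only [sum_comm (f := A), h.sum_col] using hap
  have row_le : ∀ i ∈ univ, ∑ j, A i j ≤ a i := fun i _ => h.sum_row_le i
  exact (sum_eq_sum_iff_of_le row_le).1 ((sum_le_sum row_le).antisymm total_le) i (mem_univ i)

end IsTransportPlan

section Surplus

variable [Fintype α] [AddCommGroup K] {r : α → β → Prop} {a : α → K} {p : β → K}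

lemma surplus_sub_single [DecidableEq α] [DecidableEq β] {i : α} {j : β} (hij : r i j) (t : K) :
    surplus r (a - Pi.single i t) (p - Pi.single j t) =
      surplus r a p - {J | i ∈ suppliers r J ∧ j ∉ J}.indicator fun _ => t := by
  classical
  ext J
  have hi : j ∈ J → i ∈ suppliers r J := fun hj => mem_suppliers.2 ⟨j, hj, hij⟩
  simp only [surplus, Pi.sub_apply, sum_sub_distrib, sum_pi_single', Set.indicator_apply,
    Set.mem_ofPred_eq]
  by_cases hj : j ∈ J
  · simp [hj, hi hj]
  · simp only [hj, not_false_eq_true, and_true, if_false, sub_zero]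
    exact sub_right_comm _ _ _

lemma slack_sub_single [DecidableEq α] [DecidableEq β] {i : α} {j : β} (hij : r i j) (t : K) :
    slack r (a - Pi.single i t) (p - Pi.single j t) =
      slack r a p - (loadedBy r i j).indicator fun _ => t := by
  ext (k | l | J)
  · by_cases hk : k = i <;> simp [slack, hk]
  · by_cases hl : l = j <;> simp [slack, hl]
  · exact congrFun (surplus_sub_single hij t) J

variable [PartialOrder K] [IsOrderedAddMonoid K]

lemma surplus_union_add_surplus_inter_le [DecidableEq β] (ha : ∀ i, 0 ≤ a i) (J J' : Finset β) :
    surplus r a p (J ∪ J') + surplus r a p (J ∩ J') ≤ surplus r a p J + surplus r a p J' := by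
  classical
  have supply_inter_le : ∑ i ∈ suppliers r (J ∩ J'), a i ≤
      ∑ i ∈ suppliers r J ∩ suppliers r J', a i :=
    sum_le_sum_of_subset_of_nonneg
      (subset_inter (suppliers_mono inter_subset_left) (suppliers_mono inter_subset_right))
      fun i _ _ => ha i
  simp only [surplus, suppliers_union, sub_add_sub_comm, sum_union_inter]
  rw [← sum_union_inter (s₁ := suppliers r J)]
  gcongr

lemma surplus_union_eq_zero [DecidableEq β] (ha : ∀ i, 0 ≤ a i)
    (hs : ∀ J, 0 ≤ surplus r a p J) {J J' : Finset β}
    (hJ : surplus r a p J = 0) (hJ' : surplus r a p J' = 0) : surplus r a p (J ∪ J') = 0 := by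
  refine (hs _).antisymm' ?_
  calc surplus r a p (J ∪ J') ≤ surplus r a p (J ∪ J') + surplus r a p (J ∩ J') :=
        le_add_of_nonneg_right (hs _)
    _ ≤ surplus r a p J + surplus r a p J' := surplus_union_add_surplus_inter_le ha J J'
    _ = 0 := by rw [hJ, hJ', add_zero]

lemma exists_greatest_tight_notMem [Finite β] (ha : ∀ i, 0 ≤ a i)
    (hs : ∀ J, 0 ≤ surplus r a p J) (j : β) :
    ∃ U, IsGreatest {J | surplus r a p J = 0 ∧ j ∉ J} U := by
  classical
  have := Fintype.ofFinite β
  let tight : Finset (Finset β) := {J | surplus r a p J = 0 ∧ j ∉ J}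
  refine ⟨tight.sup id, ?_, fun J hJ => le_sup (f := id) (by simpa [tight] using hJ)⟩
  refine sup_mem _ ?_ (fun J hJ J' hJ' => ?_) tight id fun J hJ => by simpa [tight] using hJ
  · simp [surplus, suppliers]
  · exact ⟨surplus_union_eq_zero ha hs hJ.1 hJ'.1, by simpa using ⟨hJ.2, hJ'.2⟩⟩

end Surplus

section Shipping

variable [Fintype α] [AddCommGroup K] [LinearOrder K] [IsOrderedAddMonoid K]
  {r : α → β → Prop} {a : α → K} {p : β → K}

lemma exists_supply_pos_of_surplus_eq_zero (hs : ∀ J, 0 ≤ surplus r a p J) {j : β}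
    (hj : 0 < p j) {U : Finset β} (hU : surplus r a p U = 0) (hjU : j ∉ U) :
    ∃ i, r i j ∧ 0 < a i ∧ i ∉ suppliers r U := by
  classical
  have surplus_insert : surplus r a p (insert j U) =
      surplus r a p U + (∑ i ∈ suppliers r {j} \ suppliers r U, a i - p j) := by
    rw [surplus, surplus, insert_eq, union_comm, suppliers_union, ← union_sdiff_self_eq_union,
      sum_union disjoint_sdiff, sum_union (disjoint_singleton_right.2 hjU), sum_singleton]
    abel
  have demand_le : p j ≤ ∑ i ∈ suppliers r {j} \ suppliers r U, a i := by
    simpa [surplus_insert, hU] using hs (insert j U)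
  obtain ⟨i, hi, hai⟩ := exists_lt_of_sum_lt (f := fun _ => (0 : K))
    (by simpa using hj.trans_le demand_le)
  rw [mem_sdiff, mem_suppliers] at hi
  exact ⟨i, by simpa using hi.1, hai, hi.2⟩

lemma exists_slack_pos_on_loadedBy [Finite β] (hslack : 0 ≤ slack r a p) {j : β} (hj : 0 < p j) :
    ∃ i, r i j ∧ ∀ x ∈ loadedBy r i j, 0 < slack r a p x := by
  have ha : ∀ i, 0 ≤ a i := fun i => hslack (.inl i)
  have hs : ∀ J, 0 ≤ surplus r a p J := fun J => hslack (.inr (.inr J))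
  obtain ⟨U, ⟨hU, hjU⟩, le_U⟩ := exists_greatest_tight_notMem ha hs j
  obtain ⟨i, hij, hai, hiU⟩ := exists_supply_pos_of_surplus_eq_zero hs hj hU hjU
  refine ⟨i, hij, ?_⟩
  rintro (k | l | J) hx
  · obtain rfl := inl_mem_loadedBy.1 hx
    exact hai
  · obtain rfl := inr_inl_mem_loadedBy.1 hx
    exact hj
  · obtain ⟨hiJ, hjJ⟩ := inr_inr_mem_loadedBy.1 hx
    exact (hs J).lt_of_ne' fun hJ => hiU (suppliers_mono (le_U ⟨hJ, hjJ⟩) hiJ)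

end Shipping

lemma exists_sub_indicator_nonneg_and_card_pos_lt [Fintype ι] [AddCommGroup K] [LinearOrder K]
    [IsOrderedAddMonoid K] {f : ι → K} (hf : 0 ≤ f) {X : Set ι} (hX : X.Nonempty)
    (hfX : ∀ x ∈ X, 0 < f x) :
    ∃ t, 0 < t ∧ 0 ≤ f - X.indicator (fun _ => t) ∧
      #{x | 0 < (f - X.indicator fun _ => t) x} < #{x | 0 < f x} := by
  classical
  obtain ⟨x₀, hx₀, hmin⟩ := X.toFinite.exists_minimalFor f X hX
  have f_x₀_le : ∀ x ∈ X, f x₀ ≤ f x := fun x hx => (le_total _ _).elim id (hmin hx)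
  have sub_le : ∀ x, (f - X.indicator fun _ => f x₀) x ≤ f x := fun x =>
    sub_le_self _ (Set.indicator_nonneg (fun _ _ => (hfX x₀ hx₀).le) x)
  refine ⟨f x₀, hfX x₀ hx₀, fun x => ?_, card_lt_card ?_⟩
  · exact sub_nonneg.2 (Set.indicator_le' f_x₀_le (fun x _ => hf x) x)
  · refine (ssubset_iff_of_subset (monotone_filter_right _ fun x _ hx => hx.trans_le (sub_le x))).2
      ⟨x₀, ?_, ?_⟩
    · simpa using hfX x₀ hx₀
    · simp [hx₀]

section SupplyDemand

variable [Fintype α] [Fintype β] [AddCommGroup K] [LinearOrder K] [IsOrderedAddMonoid K]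
  {r : α → β → Prop} {a : α → K} {p : β → K}

theorem exists_isTransportPlan_of_slack_nonneg (hslack : 0 ≤ slack r a p) :
    ∃ A, IsTransportPlan r a p A := by
  classical
  induction hN : #{x | 0 < slack r a p x} using Nat.strong_induction_on generalizing a p with
  | _ N ih =>
    subst hN
    by_cases hp : p = 0
    · exact hp ▸ ⟨0, .zero fun i => hslack (.inl i)⟩
    obtain ⟨j, hj⟩ := Function.ne_iff.1 hp
    have hpj : 0 < p j := (hslack (.inr (.inl j))).lt_of_ne' hj
    obtain ⟨i, hij, hpos⟩ := exists_slack_pos_on_loadedBy hslack hpj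
    have loaded_nonempty : (loadedBy r i j).Nonempty := ⟨.inl i, inl_mem_loadedBy.2 rfl⟩
    obtain ⟨t, ht, hslack', hcard⟩ :=
      exists_sub_indicator_nonneg_and_card_pos_lt hslack loaded_nonempty hpos
    rw [← slack_sub_single hij] at hslack' hcard
    obtain ⟨A, hA⟩ := ih _ hcard hslack' rfl
    exact ⟨_, by simpa using hA.add (.single hij ht.le)⟩

theorem exists_isTransportPlan_iff (ha : ∀ i, 0 ≤ a i) (hp : ∀ j, 0 ≤ p j) :
    (∃ A, IsTransportPlan r a p A) ↔ ∀ J, ∑ j ∈ J, p j ≤ ∑ i ∈ suppliers r J, a i := by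
  refine ⟨fun ⟨A, hA⟩ => hA.sum_demand_le, fun h => exists_isTransportPlan_of_slack_nonneg ?_⟩
  rintro (i | j | J)
  exacts [ha i, hp j, sub_nonneg.2 (h J)]

theorem rebalancing_feasible_zero_pattern_iff_general (r : α → β → Prop)
    (ha : ∀ i, 0 ≤ a i) (hp : ∀ j, 0 ≤ p j) :
    (∃ A : α → β → K,
        (∀ i j, 0 ≤ A i j) ∧
        (∀ i, ∑ j, A i j = a i) ∧
        (∀ j, ∑ i, A i j = p j) ∧
        (∀ i j, ¬ r i j → A i j = 0)) ↔
      ((∀ J, ∑ j ∈ J, p j ≤ ∑ i ∈ suppliers r J, a i) ∧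
       (∀ I, ∑ i ∈ I, a i ≤ ∑ j ∈ suppliers (fun j i => r i j) I, p j)) := by
  constructor
  · rintro ⟨A, nonneg, row, col, zero⟩
    have plan : IsTransportPlan r a p A := ⟨nonneg, fun i => (row i).le, col, zero⟩
    have plan_flip : IsTransportPlan (fun j i => r i j) p a (fun j i => A i j) :=
      ⟨fun j i => nonneg i j, fun j => (col j).le, row, fun j i => zero i j⟩
    exact ⟨plan.sum_demand_le, plan_flip.sum_demand_le⟩
  · rintro ⟨hJ, hI⟩
    obtain ⟨A, hA⟩ := (exists_isTransportPlan_iff ha hp).2 hJ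
    have total_le : ∑ i, a i ≤ ∑ j, p j :=
      (hI univ).trans (sum_le_univ_sum_of_nonneg hp)
    exact ⟨A, hA.nonneg, hA.sum_row_eq total_le, hA.sum_col, hA.eq_zero_of_not⟩

end SupplyDemand

open Classical in
/-- Feasibility of a rebalancing problem with the zero-pattern constraint
`A i j = 0` whenever `M i j = 0`: a dollar-allocation respecting the zero pattern
of `M` exists iff the two Hall-type conditions (1) and (2) hold. -/
theorem rebalancing_feasible_zero_pattern_iff
    (m n : ℕ) (M : Fin m → Fin n → ℝ) (a : Fin m → ℝ) (p : Fin n → ℝ)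
    (hM : ∀ i j, 0 ≤ M i j) (hMcol : ∀ j, ∑ i, M i j = 1)
    (ha : ∀ i, 0 ≤ a i) (hp : ∀ j, 0 ≤ p j)
    (hsum : ∑ i, a i = ∑ j, p j) :
    (∃ A : Fin m → Fin n → ℝ,
        (∀ i j, 0 ≤ A i j) ∧
        (∀ i, ∑ j, A i j = a i) ∧
        (∀ j, ∑ i, A i j = p j) ∧
        (∀ i j, M i j = 0 → A i j = 0)) ↔
      ((∀ J : Finset (Fin n),
          ∑ j ∈ J, p j ≤ ∑ i ∈ Finset.univ.filter (fun i => ∃ j ∈ J, 0 < M i j), a i) ∧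
       (∀ I : Finset (Fin m),
          ∑ i ∈ I, a i ≤ ∑ j ∈ Finset.univ.filter (fun j => ∃ i ∈ I, 0 < M i j), p j)) := by
  simpa only [filter_exists_eq_suppliers, not_lt, (hM _ _).ge_iff_eq'] using
    rebalancing_feasible_zero_pattern_iff_general (fun i j => 0 < M i j) ha hp
end

section
/- Let (M, a, p) be a rebalancing problem (so in particular ∑_{i=1}^m a_i = ∑_{j=1}^n p_j) and suppose x' ∈ ℝ^m and p' ∈ ℝ^n satisfy the asset-class equations x'_i · ∑_{j=1}^n M_{ij} p'_j = a_i for all i = 1, …, m and the portfolio equations p'_j · ∑_{i=1}^m M_{ij} x'_i = p_j for all j = 1, …, n−1. Then the remaining portfolio equation p'_n · ∑_{i=1}^m M_{in} x'_i = p_n also holds; that is, one of the m+n equations is redundant. -/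
theorem portfolio_equation_redundant_general {ι κ R : Type*} [Fintype ι] [Fintype κ]
    [NonUnitalCommSemiring R] [IsCancelAdd R] (M : Matrix ι κ R) (a x' : ι → R) (p p' : κ → R)
    (hsum : ∑ i, a i = ∑ j, p j) (hasset : ∀ i, x' i * ∑ j, M i j * p' j = a i) (k : κ)
    (hport : ∀ j, j ≠ k → p' j * ∑ i, M i j * x' i = p j) :
    p' k * ∑ i, M i k * x' i = p k := by
  have sum_portfolio : ∑ j, p' j * ∑ i, M i j * x' i = ∑ j, p j :=
    calc
      ∑ j, p' j * ∑ i, M i j * x' i = ∑ i, x' i * ∑ j, M i j * p' j :=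
        Matrix.dotProduct_transpose_mulVec M p' x'
      _ = ∑ i, a i := Finset.sum_congr rfl fun i _ ↦ hasset i
      _ = ∑ j, p j := hsum
  exact (Finset.sum_eq_sum_iff_single (Finset.mem_univ k) fun j _ ↦ hport j).mp sum_portfolio

/-- Redundancy of one equation: if `(x', p')` satisfies all of the asset-class
equations and all of the portfolio equations except the last one, then (using
`∑ a = ∑ p`) the last portfolio equation holds as well. -/
theorem portfolio_equation_redundant
    (m n : ℕ) (M : Fin m → Fin (n + 1) → ℝ) (a : Fin m → ℝ) (p : Fin (n + 1) → ℝ)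
    (hM : ∀ i j, 0 ≤ M i j) (hMcol : ∀ j, ∑ i, M i j = 1)
    (ha : ∀ i, 0 ≤ a i) (hp : ∀ j, 0 ≤ p j)
    (hsum : ∑ i, a i = ∑ j, p j)
    (x' : Fin m → ℝ) (p' : Fin (n + 1) → ℝ)
    (hasset : ∀ i, x' i * ∑ j, M i j * p' j = a i)
    (hport : ∀ j : Fin (n + 1), j ≠ Fin.last n → p' j * ∑ i, M i j * x' i = p j) :
    p' (Fin.last n) * ∑ i, M i (Fin.last n) * x' i = p (Fin.last n) :=
  portfolio_equation_redundant_general M a x' p p' hsum hasset (Fin.last n) hport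
end

section
/- Let M be a 2×2 real matrix with all entries positive, and let a₁, a₂, p₁, p₂ > 0 with a₁ + a₂ = p₁ + p₂. Set b = M₁₁M₂₂(a₁/p₁ − a₂/p₂) + M₂₁M₁₂(a₂/p₁ − a₁/p₂), c = M₁₂M₂₂(a₁ + a₂)/p₂, and d = M₁₁M₂₁(a₁ + a₂)/p₁. Then b² + 4cd > 0; the two roots K₊ = (−b + √(b² + 4cd))/(2d) and K₋ = (−b − √(b² + 4cd))/(2d) of the quadratic dK² + bK − c = 0 satisfy K₋ < 0 < K₊; and the 2×2 matrix A^$ defined by A^$_{i1} = a_i M_{i1} K₊ / (M_{i1}K₊ + M_{i2}) and A^$_{i2} = a_i M_{i2} / (M_{i1}K₊ + M_{i2}) has all entries positive, row sums A^$_{i1} + A^$_{i2} = a_i for i = 1, 2, and column sums A^$_{1j} + A^$_{2j} = p_j for j = 1, 2. Moreover, setting x'_i = a_i/(M_{i1}K₊ + M_{i2}) and p' = (K₊, 1), the pair (x', p') satisfies the asset-class equations x'_i(M_{i1}p'_1 + M_{i2}p'_2) = a_i and the portfolio equations p'_j(M_{1j}x'_1 + M_{2j}x'_2) = p_j. -/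
/-!
Seek the rebalanced matrix in the form `diag(x) M diag(q)`. Its row sums are prescribed by the
asset-class equations, which determine `x` from `q`; its column sums are prescribed by the portfolio
equations. Since both sides of the two systems have the same total, one portfolio equation is
redundant. For a `2 × 2` matrix a single equation in the ratio `K = q₀ / q₁` is left, and clearing
denominators turns it into `d K² + b K - c = 0`. As `c, d > 0`, its roots have opposite signs, and
the positive one makes every entry of the rebalanced matrix positive.
-/

open Finset

section Scaling

variable {ι κ R : Type*}

/-- The asset-class equations `x'_i ∑ⱼ Mᵢⱼ p'_j = aᵢ`. The paper's `x'` and `p'` are written `x` and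
`q` throughout. -/
def AssetClassEqs [Fintype κ] [NonUnitalNonAssocSemiring R]
    (M : ι → κ → R) (a x : ι → R) (q : κ → R) : Prop :=
  ∀ i, x i * ∑ j, M i j * q j = a i

/-- The portfolio equations `p'_j ∑ᵢ Mᵢⱼ x'_i = pⱼ`. -/
def PortfolioEqs [Fintype ι] [NonUnitalNonAssocSemiring R]
    (M : ι → κ → R) (p : κ → R) (x : ι → R) (q : κ → R) : Prop :=
  ∀ j, q j * ∑ i, M i j * x i = p j

/-- The rebalanced holdings, as the matrix `diag(x) M diag(q)`. -/
def rebalanced [Mul R] (M : ι → κ → R) (x : ι → R) (q : κ → R) (i : ι) (j : κ) : R :=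
  x i * M i j * q j

/-- The row multipliers that solve the asset-class equations for given column multipliers `q`,
provided that no entry of `M q` vanishes. -/
def assetScaling [Fintype κ] [DivisionRing R] (M : ι → κ → R) (a : ι → R) (q : κ → R) (i : ι) :
    R :=
  a i / ∑ j, M i j * q j

theorem assetClassEqs_assetScaling [Fintype κ] [DivisionRing R] {M : ι → κ → R} {q : κ → R}
    (hMq : ∀ i, ∑ j, M i j * q j ≠ 0) (a : ι → R) :
    AssetClassEqs M a (assetScaling M a q) q :=
  fun i => div_mul_cancel₀ (a i) (hMq i)

theorem rebalanced_assetScaling_apply [Fintype κ] [Field R]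
    (M : ι → κ → R) (a : ι → R) (q : κ → R) (i : ι) (j : κ) :
    rebalanced M (assetScaling M a q) q i j = a i * M i j * q j / ∑ k, M i k * q k := by
  rw [rebalanced, assetScaling, div_mul_eq_mul_div, div_mul_eq_mul_div]

theorem AssetClassEqs.sum_rebalanced_row [Fintype κ] [NonUnitalSemiring R]
    {M : ι → κ → R} {a x : ι → R} {q : κ → R} (h : AssetClassEqs M a x q) (i : ι) :
    ∑ j, rebalanced M x q i j = a i := by
  simp only [rebalanced, mul_assoc, ← mul_sum, h i]

theorem PortfolioEqs.sum_rebalanced_col [Fintype ι] [NonUnitalCommSemiring R]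
    {M : ι → κ → R} {p : κ → R} {x : ι → R} {q : κ → R} (h : PortfolioEqs M p x q) (j : κ) :
    ∑ i, rebalanced M x q i j = p j := by
  rw [← h j, mul_sum]
  exact sum_congr rfl fun i _ => by rw [rebalanced, mul_comm, mul_comm (x i)]

theorem rebalanced_pos [MulZeroClass R] [Preorder R] [PosMulStrictMono R]
    {M : ι → κ → R} {x : ι → R} {q : κ → R}
    (hM : ∀ i j, 0 < M i j) (hx : ∀ i, 0 < x i) (hq : ∀ j, 0 < q j) (i : ι) (j : κ) :
    0 < rebalanced M x q i j :=
  mul_pos (mul_pos (hx i) (hM i j)) (hq j)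

theorem AssetClassEqs.sum_portfolio [Fintype ι] [Fintype κ] [NonUnitalCommSemiring R]
    {M : ι → κ → R} {a x : ι → R} {q : κ → R} (h : AssetClassEqs M a x q) :
    ∑ j, q j * ∑ i, M i j * x i = ∑ i, a i := by
  have hcol : PortfolioEqs M (fun j => q j * ∑ i, M i j * x i) x q := fun _ => rfl
  calc ∑ j, q j * ∑ i, M i j * x i
    _ = ∑ j, ∑ i, rebalanced M x q i j := sum_congr rfl fun j _ => (hcol.sum_rebalanced_col j).symm
    _ = ∑ i, ∑ j, rebalanced M x q i j := sum_comm
    _ = ∑ i, a i := sum_congr rfl fun i _ => h.sum_rebalanced_row i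

theorem AssetClassEqs.portfolioEqs_of_forall_ne [Fintype ι] [Fintype κ] [NonUnitalCommRing R]
    {M : ι → κ → R} {a x : ι → R} {p q : κ → R} (h : AssetClassEqs M a x q)
    (hsum : ∑ i, a i = ∑ j, p j) (k : κ) (hne : ∀ j ≠ k, q j * ∑ i, M i j * x i = p j) :
    PortfolioEqs M p x q := by
  classical
  have hk : q k * ∑ i, M i k * x i = p k := by
    have htotal := h.sum_portfolio.trans hsum
    rw [Fintype.sum_eq_add_sum_compl k, Fintype.sum_eq_add_sum_compl k p,
      sum_congr rfl fun j hj => hne j (by simpa using hj)] at htotal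
    exact add_right_cancel htotal
  intro j
  obtain rfl | hj := eq_or_ne j k
  · exact hk
  · exact hne j hj

end Scaling

section TwoByTwo

variable {F : Type*} [Field F] {M : Fin 2 → Fin 2 → F} {a p x q : Fin 2 → F}

/-- The quadratic form `d q₀² + b q₀ q₁ - c q₁²` with the paper's coefficients `b`, `c`, `d`. It is
homogeneous because both systems are invariant under `(x, q) ↦ (t⁻¹ x, t q)`; the normalization
`q = (K, 1)` gives `d K² + b K - c`. -/
def rebalancingForm (M : Fin 2 → Fin 2 → F) (a p q : Fin 2 → F) : F :=
  M 0 0 * M 1 0 * (a 0 + a 1) / p 0 * q 0 ^ 2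
    + (M 0 0 * M 1 1 * (a 0 / p 0 - a 1 / p 1)
        + M 1 0 * M 0 1 * (a 1 / p 0 - a 0 / p 1)) * (q 0 * q 1)
    - M 0 1 * M 1 1 * (a 0 + a 1) / p 1 * q 1 ^ 2

theorem mul_rebalancingForm (hp : ∀ j, p j ≠ 0) (hsum : a 0 + a 1 = p 0 + p 1) :
    p 0 * p 1 * rebalancingForm M a p q =
      (a 0 + a 1) * (p 1 * (M 0 0 * q 0 + M 0 1 * q 1) * (M 1 0 * q 0 + M 1 1 * q 1)
        - q 1 * (M 0 1 * a 0 * (M 1 0 * q 0 + M 1 1 * q 1)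
          + M 1 1 * a 1 * (M 0 0 * q 0 + M 0 1 * q 1))) := by
  have hp0 := hp 0
  have hp1 := hp 1
  rw [rebalancingForm]
  field_simp
  linear_combination
    ((M 0 0 * M 1 1 * a 1 + M 1 0 * M 0 1 * a 0) * (q 0 * q 1)
      + M 0 1 * M 1 1 * (a 0 + a 1) * q 1 ^ 2) * hsum

theorem AssetClassEqs.mul_portfolio_residual (h : AssetClassEqs M a x q) (hp : ∀ j, p j ≠ 0)
    (hsum : a 0 + a 1 = p 0 + p 1) :
    (a 0 + a 1) * (∏ i, ∑ j, M i j * q j) * (p 1 - q 1 * ∑ i, M i 1 * x i) =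
      p 0 * p 1 * rebalancingForm M a p q := by
  simp only [AssetClassEqs, Fin.sum_univ_two] at h
  simp only [mul_rebalancingForm hp hsum, Fin.sum_univ_two, Fin.prod_univ_two]
  linear_combination
    -(a 0 + a 1) * q 1 * (M 0 1 * (M 1 0 * q 0 + M 1 1 * q 1) * h 0
      + M 1 1 * (M 0 0 * q 0 + M 0 1 * q 1) * h 1)

theorem AssetClassEqs.portfolioEqs_iff_snd (h : AssetClassEqs M a x q)
    (hsum : a 0 + a 1 = p 0 + p 1) :
    PortfolioEqs M p x q ↔ q 1 * ∑ i, M i 1 * x i = p 1 := by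
  refine ⟨fun hportfolio => hportfolio 1, fun hsnd => ?_⟩
  refine h.portfolioEqs_of_forall_ne (by simpa only [Fin.sum_univ_two] using hsum) 0 fun j hj => ?_
  rwa [Fin.eq_one_of_ne_zero j hj]

theorem AssetClassEqs.portfolioEqs_iff_rebalancingForm_eq_zero (h : AssetClassEqs M a x q)
    (hp : ∀ j, p j ≠ 0) (hsum : a 0 + a 1 = p 0 + p 1) (ha : a 0 + a 1 ≠ 0)
    (hMq : ∀ i, ∑ j, M i j * q j ≠ 0) :
    PortfolioEqs M p x q ↔ rebalancingForm M a p q = 0 := by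
  have hfactor : (a 0 + a 1) * ∏ i, ∑ j, M i j * q j ≠ 0 :=
    mul_ne_zero ha (prod_ne_zero_iff.2 fun i _ => hMq i)
  rw [h.portfolioEqs_iff_snd hsum, eq_comm, ← sub_eq_zero, ← mul_eq_zero_iff_left hfactor,
    h.mul_portfolio_residual hp hsum, mul_eq_zero_iff_left (mul_ne_zero (hp 0) (hp 1))]

end TwoByTwo

section Quadratic

variable {b c d : ℝ}

theorem abs_lt_sqrt_sq_add {e : ℝ} (he : 0 < e) (b : ℝ) : |b| < √(b ^ 2 + e) :=
  Real.lt_sqrt_of_sq_lt (by rw [sq_abs]; exact lt_add_of_pos_right _ he)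

theorem quadratic_eq_zero_iff_eq_sqrt (hd : d ≠ 0) (hD : 0 ≤ b ^ 2 + 4 * c * d) (K : ℝ) :
    d * K ^ 2 + b * K - c = 0 ↔
      K = (-b + √(b ^ 2 + 4 * c * d)) / (2 * d) ∨ K = (-b - √(b ^ 2 + 4 * c * d)) / (2 * d) := by
  have hdiscrim : discrim d b (-c) = √(b ^ 2 + 4 * c * d) * √(b ^ 2 + 4 * c * d) := by
    rw [Real.mul_self_sqrt hD, discrim]
    ring
  rw [← quadratic_eq_zero_iff hd hdiscrim, sq, sub_eq_add_neg]

theorem neg_add_sqrt_div_pos (hc : 0 < c) (hd : 0 < d) :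
    0 < (-b + √(b ^ 2 + 4 * c * d)) / (2 * d) := by
  have hb := (le_abs_self b).trans_lt (abs_lt_sqrt_sq_add (e := 4 * c * d) (by positivity) b)
  exact div_pos (by linarith) (by linarith)

theorem neg_sub_sqrt_div_neg (hc : 0 < c) (hd : 0 < d) :
    (-b - √(b ^ 2 + 4 * c * d)) / (2 * d) < 0 := by
  have hb := (neg_le_abs b).trans_lt (abs_lt_sqrt_sq_add (e := 4 * c * d) (by positivity) b)
  exact div_neg_of_neg_of_pos (by linarith) (by linarith)

end Quadratic

/-- Explicit analytic solution of the market-invariant rebalancing process in the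
`2 × 2` case: the discriminant `b² + 4cd` is positive, the roots `K₊ > 0 > K₋` of
`dK² + bK − c = 0` are real, and the matrix built from `K₊` is positive with row sums
`a` and column sums `p`; the associated `(x', p')` solve the asset-class and portfolio
equations. -/
theorem market_invariant_two_by_two
    (M : Fin 2 → Fin 2 → ℝ) (hM : ∀ i j, 0 < M i j)
    (a p : Fin 2 → ℝ) (ha : ∀ i, 0 < a i) (hp : ∀ j, 0 < p j)
    (hsum : a 0 + a 1 = p 0 + p 1)
    (b c d Kp Km : ℝ)
    (hb : b = M 0 0 * M 1 1 * (a 0 / p 0 - a 1 / p 1)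
            + M 1 0 * M 0 1 * (a 1 / p 0 - a 0 / p 1))
    (hc : c = M 0 1 * M 1 1 * (a 0 + a 1) / p 1)
    (hd : d = M 0 0 * M 1 0 * (a 0 + a 1) / p 0)
    (hKp : Kp = (-b + Real.sqrt (b ^ 2 + 4 * c * d)) / (2 * d))
    (hKm : Km = (-b - Real.sqrt (b ^ 2 + 4 * c * d)) / (2 * d))
    (A : Fin 2 → Fin 2 → ℝ)
    (hA0 : ∀ i, A i 0 = a i * M i 0 * Kp / (M i 0 * Kp + M i 1))
    (hA1 : ∀ i, A i 1 = a i * M i 1 / (M i 0 * Kp + M i 1))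
    (x' : Fin 2 → ℝ) (hx' : ∀ i, x' i = a i / (M i 0 * Kp + M i 1))
    (p' : Fin 2 → ℝ) (hp'0 : p' 0 = Kp) (hp'1 : p' 1 = 1) :
    0 < b ^ 2 + 4 * c * d ∧
    (d * Kp ^ 2 + b * Kp - c = 0 ∧ d * Km ^ 2 + b * Km - c = 0) ∧
    (Km < 0 ∧ 0 < Kp) ∧
    (∀ i j, 0 < A i j) ∧
    (∀ i, A i 0 + A i 1 = a i) ∧
    (∀ j, A 0 j + A 1 j = p j) ∧
    (∀ i, x' i * (M i 0 * p' 0 + M i 1 * p' 1) = a i) ∧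
    (∀ j, p' j * (M 0 j * x' 0 + M 1 j * x' 1) = p j) := by
  have ha_sum := add_pos (ha 0) (ha 1)
  have hc_pos : 0 < c := hc ▸ div_pos (mul_pos (mul_pos (hM 0 1) (hM 1 1)) ha_sum) (hp 1)
  have hd_pos : 0 < d := hd ▸ div_pos (mul_pos (mul_pos (hM 0 0) (hM 1 0)) ha_sum) (hp 0)
  have hD : 0 < b ^ 2 + 4 * c * d := by positivity
  have hroot := quadratic_eq_zero_iff_eq_sqrt hd_pos.ne' hD.le
  have hKp_root := (hroot Kp).2 (.inl hKp)
  have hKp_pos : 0 < Kp := hKp ▸ neg_add_sqrt_div_pos hc_pos hd_pos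
  have hKm_neg : Km < 0 := hKm ▸ neg_sub_sqrt_div_neg hc_pos hd_pos
  have hp'_pos : ∀ j, 0 < p' j := by simp [Fin.forall_fin_two, hp'0, hp'1, hKp_pos]
  have hMp'_pos (i) : 0 < ∑ j, M i j * p' j :=
    sum_pos (fun j _ => mul_pos (hM i j) (hp'_pos j)) univ_nonempty
  obtain rfl : x' = assetScaling M a p' := by ext i; simp [hx', assetScaling, hp'0, hp'1]
  have hasset := assetClassEqs_assetScaling (fun i => (hMp'_pos i).ne') a
  have hportfolio : PortfolioEqs M p (assetScaling M a p') p' := by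
    rw [hasset.portfolioEqs_iff_rebalancingForm_eq_zero (fun j => (hp j).ne') hsum ha_sum.ne'
      fun i => (hMp'_pos i).ne', rebalancingForm, ← hb, ← hc, ← hd, hp'0, hp'1]
    linear_combination hKp_root
  obtain rfl : A = rebalanced M (assetScaling M a p') p' := by
    ext i j; rw [rebalanced_assetScaling_apply]; fin_cases j <;> simp [hA0, hA1, hp'0, hp'1]
  refine ⟨hD, ⟨hKp_root, (hroot Km).2 (.inr hKm)⟩, ⟨hKm_neg, hKp_pos⟩,
    rebalanced_pos hM (fun i => div_pos (ha i) (hMp'_pos i)) hp'_pos, ?_, ?_, ?_, ?_⟩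
  · simpa only [Fin.sum_univ_two] using hasset.sum_rebalanced_row
  · simpa only [Fin.sum_univ_two] using hportfolio.sum_rebalanced_col
  · simpa only [AssetClassEqs, Fin.sum_univ_two] using hasset
  · simpa only [PortfolioEqs, Fin.sum_univ_two] using hportfolio
end

section
/- Let M be a 2×3 real matrix with all entries positive, let a₁, a₂ > 0 and p₁, p₂, p₃ > 0 with a₁ + a₂ = p₁ + p₂ + p₃. Define B₁ = M₁₁M₁₂M₁₃ a₂, B₂ = M₁₁M₁₂M₂₃(p₁ + p₂ − a₁) + M₁₁M₂₂M₁₃(p₁ + p₃ − a₁) + M₂₁M₁₂M₁₃(p₂ + p₃ − a₁), B₃ = M₁₁M₂₂M₂₃(p₁ − a₁) + M₂₁M₁₂M₂₃(p₂ − a₁) + M₂₁M₂₂M₁₃(p₃ − a₁), and B₄ = −a₁M₂₁M₂₂M₂₃. Then B₁ > 0, B₄ < 0, and for every real x > 0 the equation x·M₁₁p₁/(M₁₁x + M₂₁) + x·M₁₂p₂/(M₁₂x + M₂₂) + x·M₁₃p₃/(M₁₃x + M₂₃) = a₁ holds if and only if B₁x³ + B₂x² + B₃x + B₄ = 0. (Here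 x plays the role of x'₁ with x'₂ = 1 and p'_j = p_j/(M_{1j}x + M_{2j}), so positive solutions of the market-invariant equations for a 2×3 target correspond exactly to positive roots of this cubic.) -/
/-!
With `x'₂ = 1`, multiply the asset-class equation by `∏ k, (u k * x + v k)` and expand each factor
by choosing `u k * x` for `k` in a subset `t` of the indices and `v k` off `t`. The term
`x * u j * p j / (u j * x + v j)` forces `j ∈ t`, so the choice of `t` contributes
`x ^ #t * ∏ k ∈ t, u k * ∏ k ∉ t, v k * (∑ j ∈ t, p j - a)`. Collecting subsets by cardinality
gives the coefficients; the full set gives the leading one, the empty set the constant one.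
-/

open Finset

section Expansion

variable {ι R K : Type*} [DecidableEq ι]

theorem sum_div_eq_iff_sum_mul_prod_erase_eq [Semifield K] {s : Finset ι} {d : ι → K}
    (hd : ∀ j ∈ s, d j ≠ 0) (n : ι → K) (c : K) :
    ∑ j ∈ s, n j / d j = c ↔ ∑ j ∈ s, n j * ∏ k ∈ s.erase j, d k = c * ∏ k ∈ s, d k := by
  have cleared : (∑ j ∈ s, n j / d j) * ∏ k ∈ s, d k = ∑ j ∈ s, n j * ∏ k ∈ s.erase j, d k := by
    rw [sum_mul]
    refine sum_congr rfl fun j hj ↦ ?_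
    rw [← mul_prod_erase s d hj, ← mul_assoc, div_mul_cancel₀ _ (hd j hj)]
  rw [← cleared, mul_left_inj' (prod_ne_zero_iff.mpr hd)]

theorem sum_mul_prod_erase_add [CommSemiring R] (s : Finset ι) (f g p : ι → R) :
    ∑ j ∈ s, f j * p j * ∏ k ∈ s.erase j, (f k + g k) =
      ∑ t ∈ s.powerset, (∏ k ∈ t, f k) * (∏ k ∈ s \ t, g k) * ∑ j ∈ t, p j := by
  induction s using Finset.induction_on with
  | empty => simp
  | insert i s hi ih =>
    have sum_over_insert : ∑ j ∈ insert i s, f j * p j * ∏ k ∈ (insert i s).erase j, (f k + g k) =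
        f i * p i * ∏ k ∈ s, (f k + g k) +
          (f i + g i) * ∑ j ∈ s, f j * p j * ∏ k ∈ s.erase j, (f k + g k) := by
      rw [sum_insert hi, erase_insert hi, mul_sum]
      congr 1
      refine sum_congr rfl fun j hj ↦ ?_
      rw [erase_insert_of_ne (ne_of_mem_of_not_mem hj hi).symm,
        prod_insert (mt mem_of_mem_erase hi)]
      ring
    rw [sum_over_insert, ih, prod_add, sum_powerset_insert hi, mul_sum, mul_sum, ← sum_add_distrib,
      ← sum_add_distrib]
    refine sum_congr rfl fun t ht ↦ ?_
    have hit : i ∉ t := fun h ↦ hi (mem_powerset.mp ht h)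
    rw [insert_sdiff_of_notMem _ hit, insert_sdiff_insert, sdiff_insert_of_notMem hi,
      prod_insert (fun h ↦ hi (mem_sdiff.mp h).1), prod_insert hit, sum_insert hit]
    ring

end Expansion

/-- The coefficient of `x ^ k` in the polynomial obtained from the first asset-class equation
`∑ j, x * u j * p j / (u j * x + v j) = a` of a two-row target matrix with rows `u` and `v`,
after multiplying by the product of the denominators and moving everything to the left. -/
def assetCoeff {ι R : Type*} [Fintype ι] [DecidableEq ι] [CommRing R] (u v p : ι → R) (a : R)
    (k : ℕ) : R :=
  ∑ t ∈ powersetCard k univ, (∏ j ∈ t, u j) * (∏ j ∈ tᶜ, v j) * (∑ j ∈ t, p j - a)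

section AssetCoeff

variable {ι R K : Type*} [Fintype ι] [DecidableEq ι]

theorem sum_assetCoeff_mul_pow [CommRing R] (u v p : ι → R) (a x : R) :
    ∑ k ∈ range (Fintype.card ι + 1), assetCoeff u v p a k * x ^ k =
      ∑ j, x * u j * p j * ∏ k ∈ univ.erase j, (u k * x + v k) - a * ∏ k, (u k * x + v k) := by
  have expansion : ∑ j, x * u j * p j * ∏ k ∈ univ.erase j, (u k * x + v k) =
      ∑ t ∈ univ.powerset, (∏ k ∈ t, u k * x) * (∏ k ∈ univ \ t, v k) * ∑ j ∈ t, p j := by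
    simp only [mul_comm x]
    exact sum_mul_prod_erase_add univ (fun k ↦ u k * x) v p
  rw [expansion, prod_add, mul_sum, ← sum_sub_distrib, sum_powerset, card_univ]
  refine sum_congr rfl fun k _ ↦ ?_
  rw [assetCoeff, sum_mul]
  refine sum_congr rfl fun t ht ↦ ?_
  rw [prod_mul_distrib, prod_const, (mem_powersetCard.mp ht).2, ← compl_eq_univ_sdiff]
  ring

theorem sum_div_eq_iff_sum_assetCoeff_mul_pow_eq_zero [Field K] {u v : ι → K} (p : ι → K) (a : K)
    {x : K} (hx : ∀ j, u j * x + v j ≠ 0) :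
    ∑ j, x * u j * p j / (u j * x + v j) = a ↔
      ∑ k ∈ range (Fintype.card ι + 1), assetCoeff u v p a k * x ^ k = 0 := by
  rw [sum_div_eq_iff_sum_mul_prod_erase_eq fun j _ ↦ hx j, sum_assetCoeff_mul_pow, sub_eq_zero]

variable [CommRing R] (u v p : ι → R) (a : R)

theorem assetCoeff_zero : assetCoeff u v p a 0 = -(a * ∏ j, v j) := by
  simp [assetCoeff, mul_comm]

theorem assetCoeff_card :
    assetCoeff u v p a (Fintype.card ι) = (∏ j, u j) * (∑ j, p j - a) := by
  simp [assetCoeff, ← card_univ]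

end AssetCoeff

section FinThree

theorem sum_powersetCard_one_fin_three {N : Type*} [AddCommMonoid N] (F : Finset (Fin 3) → N) :
    ∑ t ∈ powersetCard 1 univ, F t = F {0} + F {1} + F {2} := by
  rw [powersetCard_one, sum_map, Fin.sum_univ_three]
  rfl

theorem sum_powersetCard_two_fin_three {N : Type*} [AddCommMonoid N] (F : Finset (Fin 3) → N) :
    ∑ t ∈ powersetCard 2 univ, F t = F {0, 1} + F {0, 2} + F {1, 2} := by
  have pairs : powersetCard 2 (univ : Finset (Fin 3)) = {{0, 1}, {0, 2}, {1, 2}} := by decide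
  rw [pairs, sum_insert (by decide), sum_pair (by decide), add_assoc]

variable {R : Type*} [CommRing R] (u v p : Fin 3 → R) (a : R)

theorem assetCoeff_one_fin_three :
    assetCoeff u v p a 1 =
      u 0 * v 1 * v 2 * (p 0 - a) + v 0 * u 1 * v 2 * (p 1 - a) + v 0 * v 1 * u 2 * (p 2 - a) := by
  have compl_zero : ({0}ᶜ : Finset (Fin 3)) = {1, 2} := by decide
  have compl_one : ({1}ᶜ : Finset (Fin 3)) = {0, 2} := by decide
  have compl_two : ({2}ᶜ : Finset (Fin 3)) = {0, 1} := by decide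
  rw [assetCoeff, sum_powersetCard_one_fin_three, compl_zero, compl_one, compl_two]
  simp +decide only [prod_singleton, sum_singleton, prod_pair, ne_eq]
  ring

theorem assetCoeff_two_fin_three :
    assetCoeff u v p a 2 =
      u 0 * u 1 * v 2 * (p 0 + p 1 - a) + u 0 * v 1 * u 2 * (p 0 + p 2 - a) +
        v 0 * u 1 * u 2 * (p 1 + p 2 - a) := by
  have compl_zero_one : ({0, 1}ᶜ : Finset (Fin 3)) = {2} := by decide
  have compl_zero_two : ({0, 2}ᶜ : Finset (Fin 3)) = {1} := by decide
  have compl_one_two : ({1, 2}ᶜ : Finset (Fin 3)) = {0} := by decide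
  rw [assetCoeff, sum_powersetCard_two_fin_three, compl_zero_one, compl_zero_two, compl_one_two]
  simp +decide only [prod_singleton, prod_pair, sum_pair, ne_eq]
  ring

end FinThree

theorem market_invariant_two_by_three_cubic_general
    {K : Type*} [Field K] [LinearOrder K] [IsStrictOrderedRing K]
    (M : Fin 2 → Fin 3 → K) (hM : ∀ i j, 0 < M i j)
    (a : Fin 2 → K) (p : Fin 3 → K) (ha : ∀ i, 0 < a i)
    (hsum : a 0 + a 1 = p 0 + p 1 + p 2)
    (B₁ B₂ B₃ B₄ : K)
    (hB₁ : B₁ = M 0 0 * M 0 1 * M 0 2 * a 1)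
    (hB₂ : B₂ = M 0 0 * M 0 1 * M 1 2 * (p 0 + p 1 - a 0)
              + M 0 0 * M 1 1 * M 0 2 * (p 0 + p 2 - a 0)
              + M 1 0 * M 0 1 * M 0 2 * (p 1 + p 2 - a 0))
    (hB₃ : B₃ = M 0 0 * M 1 1 * M 1 2 * (p 0 - a 0)
              + M 1 0 * M 0 1 * M 1 2 * (p 1 - a 0)
              + M 1 0 * M 1 1 * M 0 2 * (p 2 - a 0))
    (hB₄ : B₄ = -(a 0 * (M 1 0 * M 1 1 * M 1 2))) :
    0 < B₁ ∧ B₄ < 0 ∧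
    ∀ x : K, (∀ j, M 0 j * x + M 1 j ≠ 0) →
      (x * M 0 0 * p 0 / (M 0 0 * x + M 1 0)
        + x * M 0 1 * p 1 / (M 0 1 * x + M 1 1)
        + x * M 0 2 * p 2 / (M 0 2 * x + M 1 2) = a 0 ↔
       B₁ * x ^ 3 + B₂ * x ^ 2 + B₃ * x + B₄ = 0) := by
  have excess : ∑ j, p j - a 0 = a 1 := by rw [Fin.sum_univ_three, ← hsum, add_sub_cancel_left]
  have leading : assetCoeff (M 0) (M 1) p (a 0) 3 = B₁ := by
    simpa only [Fintype.card_fin, excess, Fin.prod_univ_three, hB₁] using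
      assetCoeff_card (M 0) (M 1) p (a 0)
  have constant : assetCoeff (M 0) (M 1) p (a 0) 0 = B₄ := by
    rw [assetCoeff_zero, Fin.prod_univ_three, hB₄]
  have cubic (x : K) : ∑ k ∈ range 4, assetCoeff (M 0) (M 1) p (a 0) k * x ^ k =
      B₁ * x ^ 3 + B₂ * x ^ 2 + B₃ * x + B₄ := by
    simp only [sum_range_succ, sum_range_zero, leading, assetCoeff_two_fin_three, ← hB₂,
      assetCoeff_one_fin_three, ← hB₃, constant]
    ring
  refine ⟨?_, ?_, fun x hx ↦ ?_⟩
  · rw [hB₁]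
    exact mul_pos (mul_pos (mul_pos (hM 0 0) (hM 0 1)) (hM 0 2)) (ha 1)
  · rw [hB₄]
    exact neg_neg_of_pos (mul_pos (ha 0) (mul_pos (mul_pos (hM 1 0) (hM 1 1)) (hM 1 2)))
  · rw [← Fin.sum_univ_three fun j ↦ x * M 0 j * p j / (M 0 j * x + M 1 j), ← cubic]
    exact sum_div_eq_iff_sum_assetCoeff_mul_pow_eq_zero p (a 0) hx

/-- The `2 × 3` case of the market-invariant rebalancing process: with `x'₂ = 1` and
`p'_j = p_j / (M_{1j} x + M_{2j})` eliminated, a positive `x` solves the remaining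
asset-class equation iff it is a root of the cubic `B₁x³ + B₂x² + B₃x + B₄ = 0`;
moreover `B₁ > 0` and `B₄ < 0`. -/
theorem market_invariant_two_by_three_cubic
    (M : Fin 2 → Fin 3 → ℝ) (hM : ∀ i j, 0 < M i j)
    (a : Fin 2 → ℝ) (p : Fin 3 → ℝ) (ha : ∀ i, 0 < a i) (hp : ∀ j, 0 < p j)
    (hsum : a 0 + a 1 = p 0 + p 1 + p 2)
    (B₁ B₂ B₃ B₄ : ℝ)
    (hB₁ : B₁ = M 0 0 * M 0 1 * M 0 2 * a 1)
    (hB₂ : B₂ = M 0 0 * M 0 1 * M 1 2 * (p 0 + p 1 - a 0)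
              + M 0 0 * M 1 1 * M 0 2 * (p 0 + p 2 - a 0)
              + M 1 0 * M 0 1 * M 0 2 * (p 1 + p 2 - a 0))
    (hB₃ : B₃ = M 0 0 * M 1 1 * M 1 2 * (p 0 - a 0)
              + M 1 0 * M 0 1 * M 1 2 * (p 1 - a 0)
              + M 1 0 * M 1 1 * M 0 2 * (p 2 - a 0))
    (hB₄ : B₄ = -(a 0 * (M 1 0 * M 1 1 * M 1 2))) :
    0 < B₁ ∧ B₄ < 0 ∧
    ∀ x : ℝ, 0 < x →
      (x * M 0 0 * p 0 / (M 0 0 * x + M 1 0)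
        + x * M 0 1 * p 1 / (M 0 1 * x + M 1 1)
        + x * M 0 2 * p 2 / (M 0 2 * x + M 1 2) = a 0 ↔
       B₁ * x ^ 3 + B₂ * x ^ 2 + B₃ * x + B₄ = 0) := by
  obtain ⟨lead_pos, const_neg, root_iff⟩ := market_invariant_two_by_three_cubic_general
    M hM a p ha hsum B₁ B₂ B₃ B₄ hB₁ hB₂ hB₃ hB₄
  exact ⟨lead_pos, const_neg, fun x hx ↦
    root_iff x fun j ↦ (add_pos (mul_pos (hM 0 j) hx) (hM 1 j)).ne'⟩
end

section
/- Let B be an m×n real matrix with all entries positive, let a ∈ ℝ^m and p ∈ ℝ^n have all entries positive with ∑_{i=1}^m a_i = ∑_{j=1}^n p_j, and suppose ∑_{i=1}^m B_{ij} = p_j for every j. Define the row-scaled matrix B^a_{ij} = B_{ij} · a_i / (∑_{t=1}^n B_{it}), and then the column-scaled matrix B'_{ij} = B^a_{ij} · p_j / (∑_{s=1}^m B^a_{sj}). Then ∑_{i=1}^m B'_{ij} = p_j for every j, and the extreme row-sum ratios improve monotonically: min_i (∑_{j=1}^n B'_{ij}) / a_i ≥ min_i (∑_{j=1}^n B_{ij})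 / a_i and max_i (∑_{j=1}^n B'_{ij}) / a_i ≤ max_i (∑_{j=1}^n B_{ij}) / a_i. -/
/-!
Let `S` be `B` with its rows rescaled. Since `S i j * ((∑ t, B i t) / a i) = B i j`, the factor
`p j / ∑ i, S i j` of the column step is the average of the row ratios `(∑ t, B i t) / a i` with
weights `S i j`, `i` varying. In turn, since `S` has row sums `a`, the new `i`-th row ratio is the
average of these column factors with weights `S i j`, `j` varying. Averages of averages stay
between the original extreme ratios.
-/

section Scaling

open Finset Function

variable {ι κ K : Type*} [Fintype κ] [Field K] {A : ι → κ → K} {a : ι → K} {i : ι}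

/-- The matrix `A` with row `i` rescaled to have sum `a i`. A row with sum `0` becomes the zero row,
as division by zero gives `0`. Columns are rescaled by applying `rowScale` to `swap A`. -/
def rowScale (A : ι → κ → K) (a : ι → K) (i : ι) (j : κ) : K :=
  A i j * a i / ∑ t, A i t

/-- The double step of the RAS iteration: rows are rescaled to sums `a`, then columns to
sums `p`. -/
def rasStep [Fintype ι] (A : ι → κ → K) (a : ι → K) (p : κ → K) : ι → κ → K :=
  swap (rowScale (swap (rowScale A a)) p)

lemma sum_rowScale (hA : ∑ j, A i j ≠ 0) : ∑ j, rowScale A a i j = a i := by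
  simp only [rowScale]
  rw [← sum_div, ← sum_mul, mul_div_cancel_left₀ _ hA]

lemma rowScale_rowScale_sum (hA : ∀ i, ∑ j, A i j ≠ 0) (ha : ∀ i, a i ≠ 0) :
    rowScale (rowScale A a) (fun i => ∑ j, A i j) = A := by
  ext i j
  rw [rowScale, sum_rowScale (hA i), rowScale, div_mul_cancel₀ _ (hA i),
    mul_div_cancel_right₀ _ (ha i)]

lemma rowScale_nonneg [LinearOrder K] [IsStrictOrderedRing K] (hA : ∀ j, 0 ≤ A i j)
    (ha : 0 ≤ a i) (j : κ) : 0 ≤ rowScale A a i j :=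
  div_nonneg (mul_nonneg (hA j) ha) (sum_nonneg fun t _ => hA t)

variable [Fintype ι]

lemma colSum_rowScale_div_colSum (A : ι → κ → K) (a : ι → K) (j : κ) :
    (∑ i, rowScale A a i j) / ∑ i, A i j =
      univ.centerMass (fun i => A i j) (fun i => a i / ∑ t, A i t) := by
  simp only [centerMass, rowScale, smul_eq_mul, mul_div_assoc]
  exact div_eq_inv_mul _ _

variable [LinearOrder K] [IsStrictOrderedRing K] {j : κ} {s : Set K}

lemma colSum_rowScale_pos (hA : ∀ i j, 0 ≤ A i j) (hrow : ∀ i, 0 < ∑ j, A i j)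
    (ha : ∀ i, 0 < a i) (hcol : 0 < ∑ i, A i j) : 0 < ∑ i, rowScale A a i j := by
  obtain ⟨i, hi, hij⟩ := (sum_pos_iff_of_nonneg fun i _ => hA i j).1 hcol
  exact sum_pos' (fun i _ => rowScale_nonneg (hA i) (ha i).le j)
    ⟨i, hi, div_pos (mul_pos hij (ha i)) (hrow i)⟩

lemma colSum_rowScale_div_colSum_mem (hs : Convex K s) (hA : ∀ i, 0 ≤ A i j)
    (hcol : 0 < ∑ i, A i j) (ha : ∀ i, a i / ∑ t, A i t ∈ s) :
    (∑ i, rowScale A a i j) / ∑ i, A i j ∈ s := by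
  rw [colSum_rowScale_div_colSum]
  exact hs.centerMass_mem (fun i _ => hA i) hcol fun i _ => ha i

lemma colSum_div_colSum_rowScale_mem (hs : Convex K s) (hA : ∀ i j, 0 ≤ A i j)
    (hrow : ∀ i, 0 < ∑ j, A i j) (hcol : 0 < ∑ i, A i j) (ha : ∀ i, 0 < a i)
    (hratio : ∀ i, (∑ j, A i j) / a i ∈ s) :
    (∑ i, A i j) / ∑ i, rowScale A a i j ∈ s := by
  -- `A` is itself a row rescaling of `rowScale A a`, so the previous lemma applies to the latter.
  have hback := rowScale_rowScale_sum (fun i => (hrow i).ne') (fun i => (ha i).ne')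
  have hmem := colSum_rowScale_div_colSum_mem (A := rowScale A a) (a := fun i => ∑ j, A i j)
    hs (fun i => rowScale_nonneg (hA i) (ha i).le j)
    (colSum_rowScale_pos hA hrow ha hcol)
    (fun i => by simpa only [sum_rowScale (hrow i).ne'] using hratio i)
  rwa [hback] at hmem

lemma rowSum_rasStep_div_mem {p : κ → K} (hs : Convex K s) (hA : ∀ i j, 0 ≤ A i j)
    (hrow : ∀ i, 0 < ∑ j, A i j) (hcol : ∀ j, ∑ i, A i j = p j) (ha : ∀ i, 0 < a i)
    (hp : ∀ j, 0 < p j) (hratio : ∀ i, (∑ j, A i j) / a i ∈ s) (i : ι) :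
    (∑ j, rasStep A a p i j) / a i ∈ s := by
  have hSrow : ∑ j, rowScale A a i j = a i := sum_rowScale (hrow i).ne'
  have hfactor (j : κ) : p j / ∑ i, rowScale A a i j ∈ s := by
    rw [← hcol j]
    exact colSum_div_colSum_rowScale_mem hs hA hrow (hcol j ▸ hp j) ha hratio
  rw [← hSrow]
  exact colSum_rowScale_div_colSum_mem (A := swap (rowScale A a)) hs
    (rowScale_nonneg (hA i) (ha i).le) (hSrow.symm ▸ ha i) hfactor

lemma colSum_rasStep {p : κ → K} (hA : ∀ i j, 0 ≤ A i j) (hrow : ∀ i, 0 < ∑ j, A i j)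
    (ha : ∀ i, 0 < a i) (hcol : 0 < ∑ i, A i j) : ∑ i, rasStep A a p i j = p j :=
  sum_rowScale (A := swap (rowScale A a)) (colSum_rowScale_pos hA hrow ha hcol).ne'

theorem ras_double_step_monotone_general [Nonempty ι] {B Ba B' : ι → κ → K} {p : κ → K}
    (hB : ∀ i j, 0 ≤ B i j) (hBrow : ∀ i, 0 < ∑ j, B i j) (ha : ∀ i, 0 < a i)
    (hp : ∀ j, 0 < p j) (hBcol : ∀ j, ∑ i, B i j = p j)
    (hBa : ∀ i j, Ba i j = B i j * a i / ∑ t, B i t)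
    (hB' : ∀ i j, B' i j = Ba i j * p j / ∑ s, Ba s j) :
    (∀ j, ∑ i, B' i j = p j) ∧
    univ.inf' univ_nonempty (fun i => (∑ j, B i j) / a i) ≤
      univ.inf' univ_nonempty (fun i => (∑ j, B' i j) / a i) ∧
    univ.sup' univ_nonempty (fun i => (∑ j, B' i j) / a i) ≤
      univ.sup' univ_nonempty (fun i => (∑ j, B i j) / a i) := by
  obtain rfl : Ba = rowScale B a := funext₂ hBa
  obtain rfl : B' = rasStep B a p := funext₂ hB'
  set ratio : ι → K := fun i => (∑ j, B i j) / a i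
  have hratio (i : ι) :
      ratio i ∈ Set.Icc (univ.inf' univ_nonempty ratio) (univ.sup' univ_nonempty ratio) :=
    ⟨inf'_le ratio (mem_univ i), le_sup' ratio (mem_univ i)⟩
  have hratio' := rowSum_rasStep_div_mem (convex_Icc _ _) hB hBrow hBcol ha hp hratio
  exact ⟨fun j => colSum_rasStep hB hBrow ha (hBcol j ▸ hp j),
    le_inf' _ _ fun i _ => (hratio' i).1, sup'_le _ _ fun i _ => (hratio' i).2⟩

end Scaling

/-- One double step of the RAS (market-invariant) iteration: rescale rows to sums `a`,
then columns to sums `p`. The resulting matrix `B'` again has column sums `p`, and the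
extreme row-sum ratios improve monotonically: the minimum of `(∑_j B'_{ij})/a_i` does
not decrease and the maximum does not increase. -/
theorem ras_double_step_monotone
    (m n : ℕ) (B : Fin (m + 1) → Fin (n + 1) → ℝ) (hB : ∀ i j, 0 < B i j)
    (a : Fin (m + 1) → ℝ) (p : Fin (n + 1) → ℝ)
    (ha : ∀ i, 0 < a i) (hp : ∀ j, 0 < p j)
    (hsum : ∑ i, a i = ∑ j, p j)
    (hBcol : ∀ j, ∑ i, B i j = p j)
    (Ba B' : Fin (m + 1) → Fin (n + 1) → ℝ)
    (hBa : ∀ i j, Ba i j = B i j * a i / ∑ t, B i t)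
    (hB' : ∀ i j, B' i j = Ba i j * p j / ∑ s, Ba s j) :
    (∀ j, ∑ i, B' i j = p j) ∧
    Finset.univ.inf' Finset.univ_nonempty (fun i => (∑ j, B i j) / a i) ≤
      Finset.univ.inf' Finset.univ_nonempty (fun i => (∑ j, B' i j) / a i) ∧
    Finset.univ.sup' Finset.univ_nonempty (fun i => (∑ j, B' i j) / a i) ≤
      Finset.univ.sup' Finset.univ_nonempty (fun i => (∑ j, B i j) / a i) := by
  exact ras_double_step_monotone_general (fun i j => (hB i j).le)
    (fun i => Finset.sum_pos (fun j _ => hB i j) Finset.univ_nonempty) ha hp hBcol hBa hB'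
end

section
/- Let M be an m×n real matrix with all entries positive and let a ∈ ℝ^m, p ∈ ℝ^n have all entries positive with ∑_{i=1}^m a_i = ∑_{j=1}^n p_j. Then there exist vectors x' ∈ ℝ^m and p' ∈ ℝ^n with all entries positive satisfying the asset-class equations x'_i · ∑_{j=1}^n M_{ij} p'_j = a_i for all i = 1, …, m and the portfolio equations p'_j · ∑_{i=1}^m M_{ij} x'_i = p_j for all j = 1, …, n; moreover x', p' may be chosen with p'_1 = 1. -/
/-!
For `q > 0` put `L q = ∑ j, p j * log (q j) - ∑ i, a i * log ((M *ᵥ q) i)`. Its stationarity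
conditions are the portfolio equations once the asset-class equations are solved for `x`, that is,
`x i = a i / (M *ᵥ q) i`. Because `a` and `p` have the same sum, `L` is invariant under positive
scaling, so it suffices to maximise it on the standard simplex. There `exp ∘ L` extends
continuously by `0` to the boundary, so a maximiser exists by compactness and is interior.
-/

section ScalingPotential

open Matrix

variable {ι κ : Type*} [Fintype κ]

lemma mulVec_pos {R : Type*} [Semiring R] [PartialOrder R] [IsStrictOrderedRing R]
    {M : Matrix ι κ R} {i : ι} (hM : ∀ j, 0 < M i j) {q : κ → R} (hq : 0 < q) :
    0 < (M *ᵥ q) i := by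
  obtain ⟨hq_nonneg, j, hqj⟩ := Pi.lt_def.1 hq
  exact Finset.sum_pos' (fun l _ => mul_nonneg (hM l).le (hq_nonneg l))
    ⟨j, Finset.mem_univ j, mul_pos (hM j) hqj⟩

lemma pos_of_mem_stdSimplex {R : Type*} [Semiring R] [PartialOrder R] [Nontrivial R]
    {q : κ → R} (hq : q ∈ stdSimplex R κ) : 0 < q := by
  refine lt_of_le_of_ne' hq.1 fun h => zero_ne_one (α := R) ?_
  rw [← hq.2, h, Finset.sum_eq_zero fun _ _ => Pi.zero_apply _]

lemma inv_sum_smul_mem_stdSimplex {𝕜 : Type*} [Field 𝕜] [LinearOrder 𝕜] [IsStrictOrderedRing 𝕜]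
    {q : κ → 𝕜} (hq : 0 < q) : (∑ j, q j)⁻¹ • q ∈ stdSimplex 𝕜 κ := by
  have hsum : 0 < ∑ j, q j := Fintype.sum_pos hq
  refine ⟨fun j => mul_nonneg (inv_nonneg.2 hsum.le) (hq.le j), ?_⟩
  simp only [Pi.smul_apply, smul_eq_mul, ← Finset.mul_sum, inv_mul_cancel₀ hsum.ne']

variable [Fintype ι]

/-- The logarithmic potential of the matrix scaling problem with marginals `a` and `p`, after the
row factors have been eliminated. It is meaningful where `q` and `M *ᵥ q` are positive. -/
noncomputable def logScalingPotential (M : Matrix ι κ ℝ) (a : ι → ℝ) (p q : κ → ℝ) : ℝ :=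
  ∑ j, p j * Real.log (q j) - ∑ i, a i * Real.log ((M *ᵥ q) i)

/-- The exponential of `logScalingPotential`, written as a product of powers so that it also makes
sense when coordinates of `q` vanish. -/
noncomputable def scalingPotential (M : Matrix ι κ ℝ) (a : ι → ℝ) (p q : κ → ℝ) : ℝ :=
  (∏ j, q j ^ p j) / ∏ i, (M *ᵥ q) i ^ a i

variable {M : Matrix ι κ ℝ} {a : ι → ℝ} {p q : κ → ℝ}

lemma scalingPotential_eq_exp (hq : ∀ j, 0 < q j) (hMq : ∀ i, 0 < (M *ᵥ q) i) :
    scalingPotential M a p q = Real.exp (logScalingPotential M a p q) := by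
  simp only [scalingPotential, logScalingPotential, Real.exp_sub, Real.exp_sum,
    Real.rpow_def_of_pos (hq _), Real.rpow_def_of_pos (hMq _), mul_comm]

lemma scalingPotential_eq_zero {j : κ} (hp : p j ≠ 0) (hq : q j = 0) :
    scalingPotential M a p q = 0 := by
  have hprod : ∏ l, q l ^ p l = 0 :=
    Finset.prod_eq_zero (Finset.mem_univ j) (by rw [hq, Real.zero_rpow hp])
  rw [scalingPotential, hprod, zero_div]

lemma continuousOn_scalingPotential {s : Set (κ → ℝ)} (hp : ∀ j, 0 ≤ p j)
    (hs : ∀ q ∈ s, ∀ i, 0 < (M *ᵥ q) i) : ContinuousOn (scalingPotential M a p) s := by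
  refine ContinuousOn.div ?_ ?_ fun q hq =>
    (Finset.prod_pos fun i _ => Real.rpow_pos_of_pos (hs q hq i) _).ne'
  · exact continuousOn_finsetProd _ fun j _ =>
      (continuous_apply j).continuousOn.rpow_const fun _ _ => Or.inr (hp j)
  · refine continuousOn_finsetProd _ fun i _ =>
      ContinuousOn.rpow_const ?_ fun q hq => Or.inl (hs q hq i).ne'
    exact ((continuous_apply i).comp (continuous_const.matrix_mulVec continuous_id)).continuousOn

lemma logScalingPotential_smul (hsum : ∑ i, a i = ∑ j, p j) {c : ℝ} (hc : c ≠ 0)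
    (hq : ∀ j, q j ≠ 0) (hMq : ∀ i, (M *ᵥ q) i ≠ 0) :
    logScalingPotential M a p (c • q) = logScalingPotential M a p q := by
  simp only [logScalingPotential, mulVec_smul, Pi.smul_apply, smul_eq_mul,
    Real.log_mul hc (hq _), Real.log_mul hc (hMq _), mul_add, Finset.sum_add_distrib,
    ← Finset.sum_mul, hsum, add_sub_add_left_eq_sub]

lemma exists_pos_isMaxOn_scalingPotential_stdSimplex [Nonempty κ] (hM : ∀ i j, 0 < M i j)
    (a : ι → ℝ) (hp : ∀ j, 0 < p j) :
    ∃ q, (∀ j, 0 < q j) ∧ IsMaxOn (scalingPotential M a p) (stdSimplex ℝ κ) q := by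
  have hMpos : ∀ q ∈ stdSimplex ℝ κ, ∀ i, 0 < (M *ᵥ q) i := fun q hq i =>
    mulVec_pos (hM i) (pos_of_mem_stdSimplex hq)
  obtain ⟨u, hu, hu_pos⟩ : ∃ u ∈ stdSimplex ℝ κ, ∀ j, 0 < u j :=
    ⟨_, (stdSimplex.barycenter : stdSimplex ℝ κ).2, fun j => by
      simp only [stdSimplex.barycenter_apply]; positivity⟩
  obtain ⟨q, hq, hmax⟩ := (isCompact_stdSimplex ℝ κ).exists_isMaxOn ⟨u, hu⟩
    (continuousOn_scalingPotential (a := a) (fun j => (hp j).le) hMpos)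
  have hpotential_pos : 0 < scalingPotential M a p q := by
    refine lt_of_lt_of_le ?_ (hmax hu)
    rw [scalingPotential_eq_exp hu_pos (hMpos u hu)]
    exact Real.exp_pos _
  exact ⟨q, fun j => (hq.1 j).lt_of_ne' fun hj =>
    hpotential_pos.ne' (scalingPotential_eq_zero (hp j).ne' hj), hmax⟩

lemma exists_isMaxOn_logScalingPotential [Nonempty κ] (hM : ∀ i j, 0 < M i j)
    (hp : ∀ j, 0 < p j) (hsum : ∑ i, a i = ∑ j, p j) :
    ∃ q, (∀ j, 0 < q j) ∧ IsMaxOn (logScalingPotential M a p) {y | ∀ j, 0 < y j} q := by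
  obtain ⟨q, hq, hmax⟩ := exists_pos_isMaxOn_scalingPotential_stdSimplex hM a hp
  refine ⟨q, hq, fun y hy => ?_⟩
  have hMpos {z : κ → ℝ} (hz : ∀ j, 0 < z j) (i : ι) : 0 < (M *ᵥ z) i :=
    mulVec_pos (hM i) (StrongLT.lt hz)
  set c := (∑ j, y j)⁻¹
  have hc : 0 < c := inv_pos.2 (Fintype.sum_pos (StrongLT.lt hy))
  have hcy : ∀ j, 0 < (c • y) j := fun j => mul_pos hc (hy j)
  rw [Set.mem_ofPred_eq, ← logScalingPotential_smul hsum hc.ne' (fun j => (hy j).ne')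
    fun i => (hMpos hy i).ne', ← Real.exp_le_exp, ← scalingPotential_eq_exp hcy (hMpos hcy),
    ← scalingPotential_eq_exp hq (hMpos hq)]
  exact hmax (inv_sum_smul_mem_stdSimplex (StrongLT.lt hy))

lemma hasDerivAt_logScalingPotential {c : ℝ → κ → ℝ} {v : κ → ℝ} {t : ℝ}
    (hc : HasDerivAt c v t) (hq : ∀ j, c t j ≠ 0) (hMq : ∀ i, (M *ᵥ c t) i ≠ 0) :
    HasDerivAt (fun s => logScalingPotential M a p (c s))
      (∑ j, p j * (v j / c t j) - ∑ i, a i * ((M *ᵥ v) i / (M *ᵥ c t) i)) t := by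
  have hcoord := hasDerivAt_pi.1 hc
  have hrow (i : ι) : HasDerivAt (fun s => (M *ᵥ c s) i) ((M *ᵥ v) i) t :=
    HasDerivAt.fun_sum fun j _ => (hcoord j).const_mul (M i j)
  exact (HasDerivAt.fun_sum fun j _ => ((hcoord j).log (hq j)).const_mul (p j)).sub
    (HasDerivAt.fun_sum fun i _ => ((hrow i).log (hMq i)).const_mul (a i))

lemma mul_transpose_mulVec_eq_of_isLocalMax
    (hmax : IsLocalMax (logScalingPotential M a p) q)
    (hq : ∀ j, q j ≠ 0) (hMq : ∀ i, (M *ᵥ q) i ≠ 0) (k : κ) :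
    q k * (Mᵀ *ᵥ (a / (M *ᵥ q))) k = p k := by
  classical
  have hcurve := hasDerivAt_update q k (q k)
  have hself : Function.update q k (q k) = q := Function.update_eq_self k q
  have hderiv := hasDerivAt_logScalingPotential (M := M) (a := a) (p := p) hcurve
    (by rwa [hself]) (by rwa [hself])
  have hmax_curve : IsLocalMax (fun s => logScalingPotential M a p (Function.update q k s)) (q k) :=
    IsLocalMax.comp_continuous (f := logScalingPotential M a p) (by rwa [hself]) hcurve.continuousAt
  have hzero := hmax_curve.hasDerivAt_eq_zero hderiv
  rw [hself] at hzero
  have hp_term : ∑ j, p j * ((Pi.single k 1 : κ → ℝ) j / q j) = p k / q k := by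
    simp [Pi.single_apply, div_eq_mul_inv]
  have hrow_term : ∑ i, a i * ((M *ᵥ Pi.single k 1) i / (M *ᵥ q) i)
      = (Mᵀ *ᵥ (a / (M *ᵥ q))) k := by
    rw [mulVec_single_one]
    exact Finset.sum_congr rfl fun i _ => mul_div_left_comm ..
  rw [hp_term, hrow_term, sub_eq_zero] at hzero
  rw [← hzero, mul_div_cancel₀ _ (hq k)]

theorem market_invariant_equations_have_positive_solution_general (M : Matrix ι κ ℝ)
    (hM : ∀ i j, 0 < M i j) (a : ι → ℝ) (p : κ → ℝ) (hp : ∀ j, 0 < p j)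
    (hsum : ∑ i, a i = ∑ j, p j) (k : κ) :
    ∃ x : ι → ℝ, ∃ y : κ → ℝ,
      (∀ i, 0 < x i ↔ 0 < a i) ∧ (∀ j, 0 < y j) ∧
      (∀ i, x i * (M *ᵥ y) i = a i) ∧ (∀ j, y j * (Mᵀ *ᵥ x) j = p j) ∧ y k = 1 := by
  have : Nonempty κ := ⟨k⟩
  obtain ⟨q, hq, hmax⟩ := exists_isMaxOn_logScalingPotential hM hp hsum
  set y := (q k)⁻¹ • q
  have hy : ∀ j, 0 < y j := fun j => mul_pos (inv_pos.2 (hq k)) (hq j)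
  have hMy : ∀ i, 0 < (M *ᵥ y) i := fun i => mulVec_pos (hM i) (StrongLT.lt hy)
  have hyq : logScalingPotential M a p y = logScalingPotential M a p q :=
    logScalingPotential_smul hsum (inv_pos.2 (hq k)).ne' (fun j => (hq j).ne')
      fun i => (mulVec_pos (hM i) (StrongLT.lt hq)).ne'
  have hlocal : IsLocalMax (logScalingPotential M a p) y := by
    filter_upwards [Filter.eventually_all.2 fun j =>
      (continuous_apply j).continuousAt.eventually (lt_mem_nhds (hy j))] with z hz
    exact hyq ▸ hmax hz
  exact ⟨a / (M *ᵥ y), y, fun i => div_pos_iff_of_pos_right (hMy i), hy,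
    fun i => div_mul_cancel₀ _ (hMy i).ne',
    mul_transpose_mulVec_eq_of_isLocalMax hlocal (fun j => (hy j).ne') fun i => (hMy i).ne',
    inv_mul_cancel₀ (hq k).ne'⟩

end ScalingPotential

/-- Existence of positive solutions to the asset-class and portfolio equations for an
entrywise positive target matrix and positive marginals with equal total sums;
moreover the solution can be normalised so that `p'₁ = 1`. -/
theorem market_invariant_equations_have_positive_solution
    (m n : ℕ) (hn : 1 ≤ n) (M : Fin m → Fin n → ℝ) (hM : ∀ i j, 0 < M i j)
    (a : Fin m → ℝ) (p : Fin n → ℝ) (ha : ∀ i, 0 < a i) (hp : ∀ j, 0 < p j)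
    (hsum : ∑ i, a i = ∑ j, p j) :
    ∃ x' : Fin m → ℝ, ∃ p' : Fin n → ℝ,
      (∀ i, 0 < x' i) ∧ (∀ j, 0 < p' j) ∧
      (∀ i, x' i * ∑ j, M i j * p' j = a i) ∧
      (∀ j, p' j * ∑ i, M i j * x' i = p j) ∧
      p' ⟨0, hn⟩ = 1 := by
  obtain ⟨x, y, hx, hrest⟩ :=
    market_invariant_equations_have_positive_solution_general (.of M) hM a p hp hsum ⟨0, hn⟩
  exact ⟨x, y, fun i => (hx i).2 (ha i), hrest⟩
end

section
/- Let M be an m×n real matrix with all entries positive and let a ∈ ℝ^m, p ∈ ℝ^n have all entries positive with ∑_{i=1}^m a_i = ∑_{j=1}^n p_j. Suppose x, x̂ ∈ ℝ^m and y, ŷ ∈ ℝ^n all have positive entries, and suppose both matrices A_{ij} = x_i M_{ij} y_j and Â_{ij} = x̂_i M_{ij} ŷ_j satisfy ∑_{j=1}^n A_{ij} = ∑_{j=1}^n Â_{ij} = a_i for every i and ∑_{i=1}^m A_{ij} = ∑_{i=1}^m Â_{ij} = p_j for every j. Then A = Â (entrywise), and moreover there exists t > 0 such that x̂_i = t·x_i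 for all i and ŷ_j = (1/t)·y_j for all j. In other words, the positive biproportional matrix with prescribed row sums a and column sums p is unique, and the scaling vectors are unique up to a single positive scalar. -/
/-!
Two biproportional scalings `A` and `Â` of `M` are scalings of each other,
`Â i j = u i * A i j * v j`. Since they have the same marginals, `Â - A` is orthogonal to every
matrix of the form `f i + g j`. Fix an entry `(k, l)` and take `f i = sign (u i - u k)` and
`g j = sign (u k * v j - 1)`. As
`u i * v j - 1 = (u i - u k) * v j + (u k * v j - 1)`, every term of the pairing is nonnegative, so
every term vanishes; the term at `(k, l)` is `|u k * v l - 1| * A k l`, whence `Â k l = A k l`.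

Once `A = Â`, the ratios `x̂ i / x i` and `y j / ŷ j` agree whenever `M i j ≠ 0`, hence they are all
equal if the bipartite graph of nonzero entries of `M` is connected.
-/

variable {ι κ K : Type*}

section Marginals

theorem nonempty_of_sum_ne_zero [Fintype κ] [AddCommMonoid K] {f : κ → K}
    (hf : ∑ j, f j ≠ 0) : Nonempty κ :=
  Finset.univ_nonempty_iff.1 (Finset.nonempty_of_sum_ne_zero hf)

theorem sum_sum_add_mul_eq_zero [Fintype ι] [Fintype κ] [NonUnitalNonAssocSemiring K]
    {D : ι → κ → K} (hrow : ∀ i, ∑ j, D i j = 0) (hcol : ∀ j, ∑ i, D i j = 0)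
    (f : ι → K) (g : κ → K) :
    ∑ i, ∑ j, (f i + g j) * D i j = 0 := by
  have hf : ∑ i, ∑ j, f i * D i j = 0 := by simp [← Finset.mul_sum, hrow]
  have hg : ∑ i, ∑ j, g j * D i j = 0 := by
    rw [Finset.sum_comm]
    simp [← Finset.mul_sum, hcol]
  simp only [add_mul, Finset.sum_add_distrib, hf, hg, add_zero]

variable [CommRing K] [LinearOrder K] [IsStrictOrderedRing K]

theorem sign_add_sign_mul_add_nonneg (a b : K) :
    0 ≤ ((SignType.sign a : K) + SignType.sign b) * (a + b) := by
  have hsign : (-1 : K) ≤ SignType.sign (a * b) := by cases SignType.sign (a * b) <;> simp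
  calc
    0 ≤ (1 + (SignType.sign (a * b) : K)) * (|a| + |b|) :=
      mul_nonneg (by linarith) (add_nonneg (abs_nonneg a) (abs_nonneg b))
    _ = (SignType.sign a + SignType.sign b) * (a + b) := by
      rw [sign_mul, SignType.coe_mul]
      linear_combination (SignType.sign b : K) * sign_mul_abs a +
        (SignType.sign a : K) * sign_mul_abs b - sign_mul_self a - sign_mul_self b

theorem mul_mul_eq_self_of_sum_eq [Fintype ι] [Fintype κ] {A : ι → κ → K} {u : ι → K} {v : κ → K}
    (hA : ∀ i j, 0 ≤ A i j) (hv : ∀ j, 0 < v j)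
    (hrow : ∀ i, ∑ j, u i * A i j * v j = ∑ j, A i j)
    (hcol : ∀ j, ∑ i, u i * A i j * v j = ∑ i, A i j) (k : ι) (l : κ) :
    u k * A k l * v l = A k l := by
  let f (i : ι) : K := SignType.sign (u i - u k)
  let g (j : κ) : K := SignType.sign (u k * v j - 1)
  let D (i : ι) (j : κ) : K := u i * A i j * v j - A i j
  have hD_nonneg (i j) : 0 ≤ (f i + g j) * D i j := by
    have hfg := sign_add_sign_mul_add_nonneg ((u i - u k) * v j) (u k * v j - 1)
    rw [sign_mul, sign_pos (hv j), mul_one] at hfg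
    calc
      0 ≤ (f i + g j) * ((u i - u k) * v j + (u k * v j - 1)) * A i j := mul_nonneg hfg (hA i j)
      _ = (f i + g j) * D i j := by ring
  have hD_sum : ∑ i, ∑ j, (f i + g j) * D i j = 0 :=
    sum_sum_add_mul_eq_zero (by simp [D, hrow]) (by simp [D, hcol]) f g
  have hD_zero : (f k + g l) * D k l = 0 := by
    have hk := (Fintype.sum_eq_zero_iff_of_nonneg
      fun i ↦ Finset.sum_nonneg fun j _ ↦ hD_nonneg i j).1 hD_sum
    exact congrFun ((Fintype.sum_eq_zero_iff_of_nonneg (hD_nonneg k)).1 (congrFun hk k)) l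
  have habs : |u k * v l - 1| * A k l = 0 := by
    calc
      |u k * v l - 1| * A k l = g l * (u k * v l - 1) * A k l := by rw [sign_mul_self]
      _ = (f k + g l) * D k l := by simp only [f, D, sub_self, sign_zero, SignType.coe_zero]; ring
      _ = 0 := hD_zero
  rcases mul_eq_zero.1 habs with huv | hkl
  · linear_combination A k l * abs_eq_zero.1 huv
  · simp [hkl]

end Marginals

section Biproportional

/-- `IsBiproportional A M` says that the matrix `A` is biproportional to `M`: it arises from `M` by
rescaling rows and columns by positive factors. -/
def IsBiproportional [Mul K] [Zero K] [LT K] (A M : ι → κ → K) : Prop :=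
  ∃ (x : ι → K) (y : κ → K), (∀ i, 0 < x i) ∧ (∀ j, 0 < y j) ∧ ∀ i j, A i j = x i * M i j * y j

namespace IsBiproportional

variable {A B M : ι → κ → K}

theorem symm [Field K] [LinearOrder K] [IsStrictOrderedRing K] (h : IsBiproportional A M) :
    IsBiproportional M A := by
  obtain ⟨x, y, hx, hy, hA⟩ := h
  refine ⟨x⁻¹, y⁻¹, fun i ↦ inv_pos.2 (hx i), fun j ↦ inv_pos.2 (hy j), fun i j ↦ ?_⟩
  have hxi := (hx i).ne'
  have hyj := (hy j).ne'
  simp only [hA, Pi.inv_apply]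
  field_simp

theorem trans [CommSemiring K] [PartialOrder K] [IsStrictOrderedRing K]
    (hAB : IsBiproportional A B) (hBM : IsBiproportional B M) : IsBiproportional A M := by
  obtain ⟨x, y, hx, hy, hA⟩ := hAB
  obtain ⟨x', y', hx', hy', hB⟩ := hBM
  refine ⟨x * x', y * y', fun i ↦ mul_pos (hx i) (hx' i), fun j ↦ mul_pos (hy j) (hy' j),
    fun i j ↦ ?_⟩
  simp only [hA, hB, Pi.mul_apply]
  ring

theorem nonneg [Semiring K] [PartialOrder K] [IsOrderedRing K] (h : IsBiproportional A M)
    (hM : ∀ i j, 0 ≤ M i j) (i : ι) (j : κ) : 0 ≤ A i j := by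
  obtain ⟨x, y, hx, hy, hA⟩ := h
  rw [hA]
  exact mul_nonneg (mul_nonneg (hx i).le (hM i j)) (hy j).le

theorem eq_of_sum_eq [Fintype ι] [Fintype κ] [CommRing K] [LinearOrder K] [IsStrictOrderedRing K]
    (h : IsBiproportional B A) (hA : ∀ i j, 0 ≤ A i j)
    (hrow : ∀ i, ∑ j, B i j = ∑ j, A i j) (hcol : ∀ j, ∑ i, B i j = ∑ i, A i j) : B = A := by
  obtain ⟨u, v, -, hv, hB⟩ := h
  simp only [hB] at hrow hcol
  ext i j
  rw [hB, mul_mul_eq_self_of_sum_eq hA hv hrow hcol]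

end IsBiproportional

end Biproportional

section SupportGraph

/-- The bipartite graph on the rows and columns of a matrix `M` in which row `i` and column `j` are
adjacent when `M i j ≠ 0`. Its connectivity is what makes scaling vectors unique up to a scalar. -/
def supportGraph [Zero K] (M : ι → κ → K) : SimpleGraph (ι ⊕ κ) :=
  SimpleGraph.fromRel fun r c ↦ ∃ i j, r = .inl i ∧ c = .inr j ∧ M i j ≠ 0

theorem supportGraph_adj_inl_inr [Zero K] {M : ι → κ → K} {i : ι} {j : κ} :
    (supportGraph M).Adj (.inl i) (.inr j) ↔ M i j ≠ 0 := by
  simp [supportGraph]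

theorem supportGraph_preconnected_of_ne_zero [Zero K] {M : ι → κ → K} (hM : ∀ i j, M i j ≠ 0)
    (hι : ι → Nonempty κ) (hκ : κ → Nonempty ι) : (supportGraph M).Preconnected := by
  have hadj (i j) : (supportGraph M).Reachable (.inl i) (.inr j) :=
    (supportGraph_adj_inl_inr.2 (hM i j)).reachable
  rintro (i | j) (i' | j')
  · obtain ⟨j⟩ := hι i
    exact (hadj i j).trans (hadj i' j).symm
  · exact hadj i j'
  · exact (hadj i' j).symm
  · obtain ⟨i⟩ := hκ j
    exact (hadj i j).symm.trans (hadj i j')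

theorem apply_eq_of_reachable {V α : Type*} {G : SimpleGraph V} {φ : V → α}
    (hφ : ∀ v w, G.Adj v w → φ v = φ w) {v w : V} (hvw : G.Reachable v w) : φ v = φ w := by
  obtain ⟨p⟩ := hvw
  induction p with
  | nil => rfl
  | cons hadj _ ih => exact (hφ _ _ hadj).trans ih

theorem sumElim_eq_of_supportGraph_adj [Zero K] {α : Type*} {M : ι → κ → K} {r : ι → α} {s : κ → α}
    (hrs : ∀ i j, M i j ≠ 0 → r i = s j) (v w : ι ⊕ κ) (hvw : (supportGraph M).Adj v w) :
    Sum.elim r s v = Sum.elim r s w := by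
  obtain ⟨-, ⟨i, j, rfl, rfl, hij⟩ | ⟨i, j, rfl, rfl, hij⟩⟩ := hvw
  · exact hrs i j hij
  · exact (hrs i j hij).symm

theorem exists_scalar_of_scaling_eq [Field K] [LinearOrder K] [IsStrictOrderedRing K]
    {M : ι → κ → K} (hM : (supportGraph M).Preconnected) {x x' : ι → K} {y y' : κ → K}
    (hx : ∀ i, 0 < x i) (hx' : ∀ i, 0 < x' i) (hy : ∀ j, 0 < y j) (hy' : ∀ j, 0 < y' j)
    (h : ∀ i j, x i * M i j * y j = x' i * M i j * y' j) :
    ∃ t : K, 0 < t ∧ (∀ i, x' i = t * x i) ∧ ∀ j, y' j = (1 / t) * y j := by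
  let φ : ι ⊕ κ → K := Sum.elim (fun i ↦ x' i / x i) (fun j ↦ y j / y' j)
  have hφ_pos (v) : 0 < φ v := by
    cases v with
    | inl i => exact div_pos (hx' i) (hx i)
    | inr j => exact div_pos (hy j) (hy' j)
  have hφ_ratio (i j) (hij : M i j ≠ 0) : x' i / x i = y j / y' j := by
    rw [div_eq_div_iff (hx i).ne' (hy' j).ne']
    exact mul_left_cancel₀ hij (by linear_combination -h i j)
  have hφ_const (v w) : φ v = φ w :=
    apply_eq_of_reachable (sumElim_eq_of_supportGraph_adj hφ_ratio) (hM v w)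
  obtain ⟨t, ht, hφt⟩ : ∃ t, 0 < t ∧ ∀ v, φ v = t := by
    rcases isEmpty_or_nonempty (ι ⊕ κ) with _ | ⟨⟨v⟩⟩
    · exact ⟨1, one_pos, isEmptyElim⟩
    · exact ⟨φ v, hφ_pos v, fun w ↦ hφ_const w v⟩
  refine ⟨t, ht, fun i ↦ (div_eq_iff (hx i).ne').1 (hφt (.inl i)), fun j ↦ ?_⟩
  rw [one_div, eq_inv_mul_iff_mul_eq₀ ht.ne']
  exact ((div_eq_iff (hy' j).ne').1 (hφt (.inr j))).symm

end SupportGraph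

theorem biproportional_unique_general [Fintype ι] [Fintype κ]
    [Field K] [LinearOrder K] [IsStrictOrderedRing K]
    {M : ι → κ → K} (hM : ∀ i j, 0 ≤ M i j) {x xh : ι → K} {y yh : κ → K}
    (hx : ∀ i, 0 < x i) (hxh : ∀ i, 0 < xh i) (hy : ∀ j, 0 < y j) (hyh : ∀ j, 0 < yh j)
    {A Ah : ι → κ → K} (hA : ∀ i j, A i j = x i * M i j * y j)
    (hAh : ∀ i j, Ah i j = xh i * M i j * yh j)
    (hrow : ∀ i, ∑ j, A i j = ∑ j, Ah i j) (hcol : ∀ j, ∑ i, A i j = ∑ i, Ah i j) :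
    A = Ah ∧ ((supportGraph M).Preconnected →
      ∃ t : K, 0 < t ∧ (∀ i, xh i = t * x i) ∧ ∀ j, yh j = (1 / t) * y j) := by
  have hAM : IsBiproportional A M := ⟨x, y, hx, hy, hA⟩
  have hAhM : IsBiproportional Ah M := ⟨xh, yh, hxh, hyh, hAh⟩
  have hAAh : A = Ah := (hAM.trans hAhM.symm).eq_of_sum_eq (hAhM.nonneg hM) hrow hcol
  refine ⟨hAAh, fun hconn ↦ exists_scalar_of_scaling_eq hconn hx hxh hy hyh fun i j ↦ ?_⟩
  rw [← hA, ← hAh, hAAh]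

/-- Uniqueness of the positive biproportional matrix with prescribed marginals: two
entrywise positive biproportional scalings of `M` with the same row sums `a` and
column sums `p` coincide, and the scaling vectors agree up to a single positive
scalar `t`. -/
theorem biproportional_unique
    (m n : ℕ) (M : Fin m → Fin n → ℝ) (hM : ∀ i j, 0 < M i j)
    (a : Fin m → ℝ) (p : Fin n → ℝ) (ha : ∀ i, 0 < a i) (hp : ∀ j, 0 < p j)
    (hsum : ∑ i, a i = ∑ j, p j)
    (x xh : Fin m → ℝ) (y yh : Fin n → ℝ)
    (hx : ∀ i, 0 < x i) (hxh : ∀ i, 0 < xh i)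
    (hy : ∀ j, 0 < y j) (hyh : ∀ j, 0 < yh j)
    (A Ah : Fin m → Fin n → ℝ)
    (hA : ∀ i j, A i j = x i * M i j * y j)
    (hAh : ∀ i j, Ah i j = xh i * M i j * yh j)
    (hArow : ∀ i, ∑ j, A i j = a i) (hAhrow : ∀ i, ∑ j, Ah i j = a i)
    (hAcol : ∀ j, ∑ i, A i j = p j) (hAhcol : ∀ j, ∑ i, Ah i j = p j) :
    A = Ah ∧
    ∃ t : ℝ, 0 < t ∧ (∀ i, xh i = t * x i) ∧ (∀ j, yh j = (1 / t) * y j) := by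
  have hconn : (supportGraph M).Preconnected :=
    supportGraph_preconnected_of_ne_zero (fun i j ↦ (hM i j).ne')
      (fun i ↦ nonempty_of_sum_ne_zero ((hArow i).trans_ne (ha i).ne'))
      (fun j ↦ nonempty_of_sum_ne_zero ((hAcol j).trans_ne (hp j).ne'))
  exact (biproportional_unique_general (fun i j ↦ (hM i j).le) hx hxh hy hyh hA hAh
    (fun i ↦ (hArow i).trans (hAhrow i).symm)
    (fun j ↦ (hAcol j).trans (hAhcol j).symm)).imp_right (· hconn)
end

section
/- Let M be an m×n real matrix with all entries positive and let a ∈ ℝ^m, p ∈ ℝ^n have all entries positive with ∑_{i=1}^m a_i = ∑_{j=1}^n p_j. Suppose A^$_{ij} = x_i M_{ij} y_j with x ∈ ℝ^m, y ∈ ℝ^n having positive entries, and suppose ∑_{j=1}^n A^$_{ij} = a_i for every i and ∑_{i=1}^m A^$_{ij} = p_j for every j. Then for every m×n real matrix B with nonnegative entries satisfying ∑_{j=1}^n B_{ij} = a_i for every i and ∑_{i=1}^m B_{ij} = p_j for every j, one has ∑_{i,j} B_{ij} log(B_{ij}/M_{ij}) ≥ ∑_{i,j} A^$_{ij} log(A^$_{ij}/M_{ij}),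 where terms with B_{ij} = 0 are interpreted as 0; and equality holds if and only if B = A^$. That is, the market-invariant (biproportional) solution is the unique minimiser of the Kullback–Leibler-type information objective over all nonnegative matrices with the prescribed marginals. -/
/-!
Since `log (A i j / M i j) = log (x i) + log (y j)`, the sum of `B i j * log (A i j / M i j)`
depends on the marginals of `B` only. Splitting `log (B / M) = log (B / A) + log (A / M)` therefore
gives the Pythagorean identity `D(B ‖ M) = D(B ‖ A) + D(A ‖ M)` for every `B` with the marginals
of `A`, where `D` denotes the information inaccuracy.
As `A` and `B` have the same total mass, `D(B ‖ A) = ∑ A * klFun (B / A)` with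
`klFun t = t * log t + 1 - t`, which is nonnegative and vanishes only at `t = 1`.
-/

section InfoInaccuracy

open Real InformationTheory

lemma mul_klFun_div {a b : ℝ} (hab : b = 0 → a = 0) :
    b * klFun (a / b) = a * log (a / b) + (b - a) := by
  rcases eq_or_ne b 0 with rfl | hb
  · simp [hab rfl]
  · rw [klFun_apply]
    field_simp
    ring

lemma mul_klFun_div_nonneg {a b : ℝ} (ha : 0 ≤ a) (hb : 0 ≤ b) : 0 ≤ b * klFun (a / b) :=
  mul_nonneg hb (klFun_nonneg (div_nonneg ha hb))

lemma mul_klFun_div_eq_zero_iff {a b : ℝ} (ha : 0 ≤ a) (hb : 0 ≤ b) (hab : b = 0 → a = 0) :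
    b * klFun (a / b) = 0 ↔ a = b := by
  rcases eq_or_ne b 0 with rfl | hb₀
  · simp [hab rfl]
  · rw [mul_eq_zero_iff_left hb₀, klFun_eq_zero_iff (div_nonneg ha hb), div_eq_one_iff_eq hb₀]

lemma mul_log_div_add_mul_log_div {a b c : ℝ} (hab : b = 0 → a = 0) (hbc : c = 0 → b = 0) :
    a * log (a / b) + a * log (b / c) = a * log (a / c) := by
  rcases eq_or_ne a 0 with rfl | ha
  · simp
  · have hb : b ≠ 0 := mt hab ha
    have hc : c ≠ 0 := mt hbc hb
    rw [← mul_add, ← log_mul (div_ne_zero ha hb) (div_ne_zero hb hc), div_mul_div_cancel₀ hb]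

variable {ι : Type*} [Fintype ι] {f g h : ι → ℝ}

/-- The information inaccuracy (Kullback–Leibler divergence) `D(f ‖ g)` of a finite nonnegative
family `f` relative to `g`; for matrices, apply it to the families indexed by pairs. Where
`g i = 0 < f i` the true divergence is `+∞`, but here `x / 0 = 0` makes the `i`-th term `0`. -/
noncomputable def infoInaccuracy (f g : ι → ℝ) : ℝ :=
  ∑ i, f i * log (f i / g i)

lemma infoInaccuracy_uncurry {κ : Type*} [Fintype κ] (B M : ι → κ → ℝ) :
    infoInaccuracy B.uncurry M.uncurry =
      ∑ i, ∑ j, B i j * log (B i j / M i j) :=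
  Fintype.sum_prod_type _

lemma infoInaccuracy_eq_sum_mul_klFun (hfg : ∀ i, g i = 0 → f i = 0)
    (hsum : ∑ i, f i = ∑ i, g i) :
    infoInaccuracy f g = ∑ i, g i * klFun (f i / g i) := by
  simp only [infoInaccuracy, mul_klFun_div (hfg _), Finset.sum_add_distrib,
    Finset.sum_sub_distrib, hsum, sub_self, add_zero]

lemma infoInaccuracy_nonneg (hf : ∀ i, 0 ≤ f i) (hg : ∀ i, 0 ≤ g i)
    (hfg : ∀ i, g i = 0 → f i = 0) (hsum : ∑ i, f i = ∑ i, g i) :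
    0 ≤ infoInaccuracy f g := by
  rw [infoInaccuracy_eq_sum_mul_klFun hfg hsum]
  exact Finset.sum_nonneg fun i _ => mul_klFun_div_nonneg (hf i) (hg i)

lemma infoInaccuracy_eq_zero_iff (hf : ∀ i, 0 ≤ f i) (hg : ∀ i, 0 ≤ g i)
    (hfg : ∀ i, g i = 0 → f i = 0) (hsum : ∑ i, f i = ∑ i, g i) :
    infoInaccuracy f g = 0 ↔ f = g := by
  rw [infoInaccuracy_eq_sum_mul_klFun hfg hsum,
    Finset.sum_eq_zero_iff_of_nonneg fun i _ => mul_klFun_div_nonneg (hf i) (hg i), funext_iff]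
  simp only [Finset.mem_univ, true_imp_iff, mul_klFun_div_eq_zero_iff (hf _) (hg _) (hfg _)]

lemma infoInaccuracy_add_of_sum_mul_log_eq (hfg : ∀ i, g i = 0 → f i = 0)
    (hgh : ∀ i, h i = 0 → g i = 0)
    (hlog : ∑ i, f i * log (g i / h i) = ∑ i, g i * log (g i / h i)) :
    infoInaccuracy f g + infoInaccuracy g h = infoInaccuracy f h := by
  simp only [infoInaccuracy, ← hlog, ← Finset.sum_add_distrib,
    mul_log_div_add_mul_log_div (hfg _) (hgh _)]

end InfoInaccuracy

section Biproportional

open Real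

variable {ι κ : Type*} [Fintype ι] [Fintype κ]

lemma sum_mul_add_eq_of_marginals_eq {R : Type*} [NonUnitalNonAssocSemiring R] {A B : ι → κ → R}
    (hrow : ∀ i, ∑ j, B i j = ∑ j, A i j) (hcol : ∀ j, ∑ i, B i j = ∑ i, A i j)
    (u : ι → R) (v : κ → R) :
    ∑ i, ∑ j, B i j * (u i + v j) = ∑ i, ∑ j, A i j * (u i + v j) := by
  have split (C : ι → κ → R) : ∑ i, ∑ j, C i j * (u i + v j) =
      ∑ i, (∑ j, C i j) * u i + ∑ j, (∑ i, C i j) * v j := by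
    simp only [mul_add, Finset.sum_add_distrib, Finset.sum_mul]
    rw [Finset.sum_comm (f := fun i j => C i j * v j)]
  simp only [split, hrow, hcol]

lemma sum_mul_log_biproportional_eq {M A B : ι → κ → ℝ} {x : ι → ℝ} {y : κ → ℝ}
    (hx : ∀ i, x i ≠ 0) (hy : ∀ j, y j ≠ 0) (hA : ∀ i j, A i j = x i * M i j * y j)
    (hBM : ∀ i j, M i j = 0 → B i j = 0)
    (hrow : ∀ i, ∑ j, B i j = ∑ j, A i j) (hcol : ∀ j, ∑ i, B i j = ∑ i, A i j) :
    ∑ i, ∑ j, B i j * log (A i j / M i j) = ∑ i, ∑ j, A i j * log (A i j / M i j) := by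
  have log_split (C : ι → κ → ℝ) (hCM : ∀ i j, M i j = 0 → C i j = 0) (i : ι) (j : κ) :
      C i j * log (A i j / M i j) = C i j * (log (x i) + log (y j)) := by
    rcases eq_or_ne (M i j) 0 with hM | hM
    · simp [hCM i j hM]
    · rw [hA, mul_right_comm, mul_div_cancel_right₀ _ hM, log_mul (hx i) (hy j)]
  have hAM : ∀ i j, M i j = 0 → A i j = 0 := fun i j hM => by simp [hA, hM]
  simp only [log_split B hBM, log_split A hAM]
  exact sum_mul_add_eq_of_marginals_eq hrow hcol _ _

lemma infoInaccuracy_add_of_biproportional {M A B : ι → κ → ℝ} {x : ι → ℝ} {y : κ → ℝ}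
    (hx : ∀ i, x i ≠ 0) (hy : ∀ j, y j ≠ 0) (hA : ∀ i j, A i j = x i * M i j * y j)
    (hBM : ∀ i j, M i j = 0 → B i j = 0)
    (hrow : ∀ i, ∑ j, B i j = ∑ j, A i j) (hcol : ∀ j, ∑ i, B i j = ∑ i, A i j) :
    infoInaccuracy B.uncurry A.uncurry + infoInaccuracy A.uncurry M.uncurry =
      infoInaccuracy B.uncurry M.uncurry := by
  have A_eq_zero_iff (i : ι) (j : κ) : A i j = 0 ↔ M i j = 0 := by simp [hA, hx i, hy j]
  refine infoInaccuracy_add_of_sum_mul_log_eq (fun z hz => hBM _ _ ((A_eq_zero_iff _ _).1 hz))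
    (fun z hz => (A_eq_zero_iff _ _).2 hz) ?_
  simpa only [Fintype.sum_prod_type, Function.uncurry_apply_pair] using
    sum_mul_log_biproportional_eq hx hy hA hBM hrow hcol

theorem biproportional_minimises_KL_general {M A B : ι → κ → ℝ} {x : ι → ℝ} {y : κ → ℝ}
    (hM : ∀ i j, 0 ≤ M i j) (hx : ∀ i, 0 < x i) (hy : ∀ j, 0 < y j)
    (hA : ∀ i j, A i j = x i * M i j * y j)
    (hB : ∀ i j, 0 ≤ B i j) (hBM : ∀ i j, M i j = 0 → B i j = 0)
    (hrow : ∀ i, ∑ j, B i j = ∑ j, A i j) (hcol : ∀ j, ∑ i, B i j = ∑ i, A i j) :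
    (∑ i, ∑ j, A i j * log (A i j / M i j) ≤
      ∑ i, ∑ j, B i j * log (B i j / M i j)) ∧
    ((∑ i, ∑ j, B i j * log (B i j / M i j) =
      ∑ i, ∑ j, A i j * log (A i j / M i j)) ↔ B = A) := by
  have A_nonneg (z : ι × κ) : 0 ≤ A.uncurry z :=
    (mul_nonneg (mul_nonneg (hx z.1).le (hM _ _)) (hy z.2).le).trans_eq (hA _ _).symm
  have B_nonneg (z : ι × κ) : 0 ≤ B.uncurry z := hB _ _
  have hBA : ∀ z, A.uncurry z = 0 → B.uncurry z = 0 := fun (i, j) hz =>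
    hBM i j (by simpa [hA, (hx i).ne', (hy j).ne'] using hz)
  have mass_eq : ∑ z, B.uncurry z = ∑ z, A.uncurry z := by
    simp only [Fintype.sum_prod_type, Function.uncurry_apply_pair, hrow]
  have pythagoras := infoInaccuracy_add_of_biproportional (fun i => (hx i).ne')
    (fun j => (hy j).ne') hA hBM hrow hcol
  simp only [← infoInaccuracy_uncurry, ← pythagoras]
  refine ⟨le_add_of_nonneg_left (infoInaccuracy_nonneg B_nonneg A_nonneg hBA mass_eq), ?_⟩
  rw [add_eq_right, infoInaccuracy_eq_zero_iff B_nonneg A_nonneg hBA mass_eq]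
  exact Function.uncurry_injective.eq_iff

end Biproportional

/-- The market-invariant (biproportional) solution is the unique minimiser of the
Kullback–Leibler-type information objective `∑ B_{ij} log(B_{ij}/M_{ij})` over all
nonnegative matrices `B` with row sums `a` and column sums `p`. (Terms with
`B_{ij} = 0` vanish automatically since `0 * log 0 = 0` in Lean.) -/
theorem biproportional_minimises_KL
    (m n : ℕ) (M : Fin m → Fin n → ℝ) (hM : ∀ i j, 0 < M i j)
    (a : Fin m → ℝ) (p : Fin n → ℝ) (ha : ∀ i, 0 < a i) (hp : ∀ j, 0 < p j)
    (hsum : ∑ i, a i = ∑ j, p j)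
    (x : Fin m → ℝ) (y : Fin n → ℝ) (hx : ∀ i, 0 < x i) (hy : ∀ j, 0 < y j)
    (A : Fin m → Fin n → ℝ)
    (hA : ∀ i j, A i j = x i * M i j * y j)
    (hArow : ∀ i, ∑ j, A i j = a i)
    (hAcol : ∀ j, ∑ i, A i j = p j) :
    ∀ B : Fin m → Fin n → ℝ,
      (∀ i j, 0 ≤ B i j) →
      (∀ i, ∑ j, B i j = a i) →
      (∀ j, ∑ i, B i j = p j) →
      (∑ i, ∑ j, A i j * Real.log (A i j / M i j) ≤
        ∑ i, ∑ j, B i j * Real.log (B i j / M i j)) ∧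
      ((∑ i, ∑ j, B i j * Real.log (B i j / M i j) =
        ∑ i, ∑ j, A i j * Real.log (A i j / M i j)) ↔ B = A) :=
  fun _ hB hBrow hBcol => biproportional_minimises_KL_general (fun i j => (hM i j).le) hx hy hA hB
    (fun i j h => absurd h (hM i j).ne') (fun i => (hBrow i).trans (hArow i).symm)
    (fun j => (hBcol j).trans (hAcol j).symm)
end

section
/- Let T ≥ 1 and m ≥ 1, and let R : {1,…,m} × {1,…,T} → ℝ satisfy R(i,t) > 0 for all i, t and ∏_{t=1}^T R(i,t) = 1 for each i (tethered gross returns). Then for every tuple of indices (i₁, …, i_T) ∈ {1,…,m}^T, averaging over the symmetric group S_T gives (1/T!) · ∑_{σ ∈ S_T} ∏_{t=1}^T R(i_{σ(t)}, t) ≥ 1. Equivalently, the sum over all distinct permutations of the multiset {i₁, …, i_T} of the products ∏_t R(σ_t, t) is at least the number of such distinct permutations. -/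
/-!
If a finite group acts transitively on the index set, then for fixed `t` the point `g • t` is
uniformly distributed as `g` ranges over the group. Hence the products `∏ t, A (g • t) t`, taken
over all `g`, contain each entry of the matrix `A` equally often, so their geometric mean is a power
of the product of all entries of `A`. By AM–GM the arithmetic mean is at least as large. Tethered
returns make the product of all entries equal to `1`.
-/

section TransitiveAction

variable {G α M : Type*} [Group G] [Fintype G] [MulAction G α] [MulAction.IsPretransitive G α]
  [CommMonoid M]

theorem prod_group_smul_eq_prod_group_smul (f : α → M) (a b : α) :
    ∏ g : G, f (g • a) = ∏ g : G, f (g • b) := by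
  obtain ⟨h, rfl⟩ := MulAction.exists_smul_eq G b a
  simp only [← mul_smul]
  exact Equiv.prod_comp (Equiv.mulRight h) fun g => f (g • b)

theorem prod_group_smul_pow_card [Fintype α] (f : α → M) (a : α) :
    (∏ g : G, f (g • a)) ^ Fintype.card α = (∏ b, f b) ^ Fintype.card G := by
  calc (∏ g : G, f (g • a)) ^ Fintype.card α
      = ∏ _b : α, ∏ g : G, f (g • a) := by rw [Finset.prod_const, Finset.card_univ]
    _ = ∏ b : α, ∏ g : G, f (g • b) :=
        Fintype.prod_congr _ _ fun b => prod_group_smul_eq_prod_group_smul f a b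
    _ = ∏ g : G, ∏ b : α, f (g • b) := Finset.prod_comm
    _ = ∏ _g : G, ∏ b, f b :=
        Fintype.prod_congr _ _ fun g => Equiv.prod_comp (MulAction.toPerm g) f
    _ = (∏ b, f b) ^ Fintype.card G := by rw [Finset.prod_const, Finset.card_univ]

theorem prod_group_prod_smul_pow_card [Fintype α] (A : α → α → M) :
    (∏ g : G, ∏ t, A (g • t) t) ^ Fintype.card α = (∏ s, ∏ t, A s t) ^ Fintype.card G := by
  calc (∏ g : G, ∏ t, A (g • t) t) ^ Fintype.card α
      = ∏ t, (∏ g : G, A (g • t) t) ^ Fintype.card α := by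
        rw [Finset.prod_comm, Finset.prod_pow]
    _ = ∏ t, (∏ s, A s t) ^ Fintype.card G :=
        Fintype.prod_congr _ _ fun t => prod_group_smul_pow_card (A · t) t
    _ = (∏ s, ∏ t, A s t) ^ Fintype.card G := by
        rw [Finset.prod_pow, Finset.prod_comm]

end TransitiveAction

theorem prod_le_sum_div_card_pow_card {ι : Type*} (s : Finset ι) (z : ι → ℝ)
    (hz : ∀ i ∈ s, 0 ≤ z i) :
    ∏ i ∈ s, z i ≤ ((∑ i ∈ s, z i) / s.card) ^ s.card := by
  rcases s.eq_empty_or_nonempty with rfl | hs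
  · simp
  have geom_le_arith : (∏ i ∈ s, z i) ^ (s.card : ℝ)⁻¹ ≤ (∑ i ∈ s, z i) / s.card := by
    simpa using Real.geom_mean_le_arith_mean s (fun _ => 1) z (by simp) (by simpa using hs) hz
  have prod_nonneg : 0 ≤ ∏ i ∈ s, z i := Finset.prod_nonneg hz
  calc ∏ i ∈ s, z i = ((∏ i ∈ s, z i) ^ (s.card : ℝ)⁻¹) ^ s.card :=
        (Real.rpow_inv_natCast_pow prod_nonneg hs.card_ne_zero).symm
    _ ≤ ((∑ i ∈ s, z i) / s.card) ^ s.card := by gcongr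

theorem group_average_prod_nonneg {G ι : Type*} [Fintype G] [Fintype ι] [SMul G ι]
    (A : ι → ι → ℝ) (hA : ∀ s t, 0 ≤ A s t) :
    0 ≤ (∑ g : G, ∏ t, A (g • t) t) / Fintype.card G :=
  div_nonneg (Fintype.sum_nonneg fun _ => Finset.prod_nonneg fun _ _ => hA _ _)
    (Nat.cast_nonneg _)

section TransitiveAverage

variable {G ι : Type*} [Group G] [Fintype G] [Fintype ι] [MulAction G ι]
  [MulAction.IsPretransitive G ι]

theorem prod_prod_le_group_average_pow_card (A : ι → ι → ℝ) (hA : ∀ s t, 0 ≤ A s t) :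
    ∏ s, ∏ t, A s t ≤
      ((∑ g : G, ∏ t, A (g • t) t) / Fintype.card G) ^ Fintype.card ι := by
  have summand_nonneg (g : G) : 0 ≤ ∏ t, A (g • t) t := Finset.prod_nonneg fun t _ => hA _ t
  have amgm := prod_le_sum_div_card_pow_card Finset.univ (fun g : G => ∏ t, A (g • t) t)
    fun g _ => summand_nonneg g
  rw [Finset.card_univ] at amgm
  refine le_of_pow_le_pow_left₀ (Fintype.card_ne_zero (α := G))
    (pow_nonneg (group_average_prod_nonneg A hA) _) ?_
  calc (∏ s, ∏ t, A s t) ^ Fintype.card G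
      = (∏ g : G, ∏ t, A (g • t) t) ^ Fintype.card ι := (prod_group_prod_smul_pow_card A).symm
    _ ≤ (((∑ g : G, ∏ t, A (g • t) t) / Fintype.card G) ^ Fintype.card G) ^ Fintype.card ι :=
        pow_le_pow_left₀ (Finset.prod_nonneg fun g _ => summand_nonneg g) amgm _
    _ = (((∑ g : G, ∏ t, A (g • t) t) / Fintype.card G) ^ Fintype.card ι) ^ Fintype.card G :=
        pow_right_comm _ _ _

theorem tethered_returns_permutation_average_ge_one_general [Nonempty ι]
    (A : ι → ι → ℝ) (hA : ∀ s t, 0 ≤ A s t) (one_le_prod : 1 ≤ ∏ s, ∏ t, A s t) :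
    1 ≤ (∑ g : G, ∏ t, A (g • t) t) / Fintype.card G :=
  (one_le_pow_iff_of_nonneg (group_average_prod_nonneg A hA) Fintype.card_ne_zero).1
    (one_le_prod.trans (prod_prod_le_group_average_pow_card A hA))

end TransitiveAverage

/-- For tethered gross returns (every asset class has total gross return `1` over the
horizon), the average over all permutations `σ` of the horizon of the products
`∏_t R(i_{σ(t)}, t)` is at least `1`, for every tuple of asset-class indices. -/
theorem tethered_returns_permutation_average_ge_one
    (m T : ℕ) (hm : 1 ≤ m) (hT : 1 ≤ T)
    (R : Fin m → Fin T → ℝ)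
    (hR : ∀ i t, 0 < R i t)
    (hteth : ∀ i, ∏ t, R i t = 1)
    (idx : Fin T → Fin m) :
    1 ≤ (1 / (Nat.factorial T : ℝ)) *
        ∑ σ : Equiv.Perm (Fin T), ∏ t, R (idx (σ t)) t := by
  have : Nonempty (Fin T) := ⟨⟨0, hT⟩⟩
  simpa [Fintype.card_perm, inv_mul_eq_div] using
    tethered_returns_permutation_average_ge_one_general (G := Equiv.Perm (Fin T))
      (fun s t => R (idx s) t) (fun s t => (hR (idx s) t).le) (by simp [hteth])
end

section
/- Let T ≥ 1 and m ≥ 1, let R : {1,…,m} × {1,…,T} → ℝ satisfy R(i,t) > 0 for all i, t and ∏_{t=1}^T R(i,t) = 1 for each i (tethered gross returns), and let w ∈ ℝ^m satisfy w_i ≥ 0 for all i and ∑_{i=1}^m w_i = 1 (a target weight vector). Then ∏_{t=1}^T ( ∑_{i=1}^m w_i · R(i,t) ) ≥ 1. Moreover, the inequality is strict if there exist a period t and indices i₁, i₂ with w_{i₁} > 0, w_{i₂} > 0 and R(i₁,t) ≠ R(i₂,t); in particular, a portfolio rebalanced to fixed target weights w at every period ends with at least its initial value, and strictly more unless all asset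 classes in its support move in unison at every period. -/
/-!
In each period the portfolio return is a weighted arithmetic mean, hence at least the weighted
geometric mean of the asset returns. Multiplied over the periods, these geometric means give the
weighted geometric mean of the total asset returns, and this is `1` for tethered returns.
The product inequality is strict as soon as AM-GM is strict in one period.
-/

variable {ι τ : Type*}

theorem prod_lt_prod_iff_of_pos_of_le {M : Type*} [CommSemiring M] [PartialOrder M]
    [IsStrictOrderedRing M] {s : Finset ι} {f g : ι → M}
    (hf : ∀ i ∈ s, 0 < f i) (hfg : ∀ i ∈ s, f i ≤ g i) :
    ∏ i ∈ s, f i < ∏ i ∈ s, g i ↔ ∃ i ∈ s, f i < g i := by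
  refine ⟨fun hlt ↦ ?_, Finset.prod_lt_prod hf hfg⟩
  by_contra! hnlt
  exact hlt.ne (Finset.prod_congr rfl fun i hi ↦ (hfg i hi).eq_of_not_lt (hnlt i hi))

theorem prod_prod_rpow_comm {s : Finset ι} {u : Finset τ} {z : ι → τ → ℝ} {w : ι → ℝ}
    (hz : ∀ i ∈ s, ∀ t ∈ u, 0 ≤ z i t) :
    ∏ i ∈ s, (∏ t ∈ u, z i t) ^ w i = ∏ t ∈ u, ∏ i ∈ s, z i t ^ w i := by
  rw [Finset.prod_comm]
  exact Finset.prod_congr rfl fun i hi ↦ (Real.finsetProd_rpow u (z i) (hz i hi) (w i)).symm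

theorem tethered_returns_fixed_weights_ge_one_general
    {s : Finset ι} {u : Finset τ} {R : ι → τ → ℝ} {w : ι → ℝ}
    (hR : ∀ i ∈ s, ∀ t ∈ u, 0 < R i t)
    (hw : ∀ i ∈ s, 0 ≤ w i) (hw1 : ∑ i ∈ s, w i = 1) :
    ∏ i ∈ s, (∏ t ∈ u, R i t) ^ w i ≤ ∏ t ∈ u, ∑ i ∈ s, w i * R i t ∧
    (∏ i ∈ s, (∏ t ∈ u, R i t) ^ w i < ∏ t ∈ u, ∑ i ∈ s, w i * R i t ↔
      ∃ t ∈ u, ∃ i₁ ∈ s, ∃ i₂ ∈ s, 0 < w i₁ ∧ 0 < w i₂ ∧ R i₁ t ≠ R i₂ t) := by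
  have hR0 : ∀ i ∈ s, ∀ t ∈ u, 0 ≤ R i t := fun i hi t ht ↦ (hR i hi t ht).le
  have hgm_pos : ∀ t ∈ u, 0 < ∏ i ∈ s, R i t ^ w i := fun t ht ↦
    Finset.prod_pos fun i hi ↦ Real.rpow_pos_of_pos (hR i hi t ht) _
  have hgm_le_am : ∀ t ∈ u, ∏ i ∈ s, R i t ^ w i ≤ ∑ i ∈ s, w i * R i t := fun t ht ↦
    Real.geom_mean_le_arith_mean_weighted s w (R · t) hw hw1 fun i hi ↦ hR0 i hi t ht
  have hgm_lt_am : ∀ t ∈ u, (∏ i ∈ s, R i t ^ w i < ∑ i ∈ s, w i * R i t ↔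
      ∃ i₁ ∈ s, ∃ i₂ ∈ s, 0 < w i₁ ∧ 0 < w i₂ ∧ R i₁ t ≠ R i₂ t) := by
    intro t ht
    rw [Real.geom_mean_lt_arith_mean_weighted_iff_of_nonneg s w (R · t) hw hw1
      fun i hi ↦ hR0 i hi t ht]
    grind
  rw [prod_prod_rpow_comm hR0, prod_lt_prod_iff_of_pos_of_le hgm_pos hgm_le_am]
  exact ⟨Finset.prod_le_prod (fun t ht ↦ (hgm_pos t ht).le) hgm_le_am,
    exists_congr fun t ↦ and_congr_right (hgm_lt_am t)⟩

/-- A portfolio rebalanced to fixed target weights `w` every period, under tethered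
gross returns, ends with at least its initial value: `∏_t ∑_i w_i R(i,t) ≥ 1`; the
inequality is strict whenever two asset classes in the support of `w` have different
returns in some period. -/
theorem tethered_returns_fixed_weights_ge_one
    (m T : ℕ) (hm : 1 ≤ m) (hT : 1 ≤ T)
    (R : Fin m → Fin T → ℝ)
    (hR : ∀ i t, 0 < R i t)
    (hteth : ∀ i, ∏ t, R i t = 1)
    (w : Fin m → ℝ) (hw : ∀ i, 0 ≤ w i) (hw1 : ∑ i, w i = 1) :
    1 ≤ ∏ t, ∑ i, w i * R i t ∧
    ((∃ t : Fin T, ∃ i₁ i₂ : Fin m,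
        0 < w i₁ ∧ 0 < w i₂ ∧ R i₁ t ≠ R i₂ t) →
      1 < ∏ t, ∑ i, w i * R i t) := by
  obtain ⟨hle, hlt⟩ := tethered_returns_fixed_weights_ge_one_general
    (fun i _ t (_ : t ∈ Finset.univ) ↦ hR i t) (fun i _ ↦ hw i) hw1
  simp only [hteth, Real.one_rpow, Finset.prod_const_one, Finset.mem_univ, true_and] at hle hlt
  exact ⟨hle, hlt.mpr⟩
end
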